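/- arXiv:math/9811074 — 2 statements merged into one kernel-verified Lean document; each statement's English description precedes it below -/
import Mathlib

section
/- Let p₀,p₁,p₂,p₃ ∈ ℝ³ be points such that five of the six pairwise distances equal 2 and the remaining pairwise distance equals 2√2 (a quarter of a regular octahedron of edge 2). Then Γ(S) = 0 for S = conv{p₀,p₁,p₂,p₃}; equivalently, vol(S ∩ (B(p₀,1) ∪ B(p₁,1) ∪ B(p₂,1) ∪ B(p₃,1))) = δ_oct·vol(S). -/
open MeasureTheory Real

noncomputable section

abbrev E3 : Type := EuclideanSpace ℝ (Fin 3)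

/-- The density of the regular octahedron. -/
def δoct : ℝ := (-3 * π + 12 * arccos (1 / Real.sqrt 3)) / Real.sqrt 8

/-- The compression `Γ(S)` of the simplex `S = conv {p₀, p₁, p₂, p₃}`:
`Γ(S) = -δ_oct · vol S + vol (S ∩ (B(p₀,1) ∪ B(p₁,1) ∪ B(p₂,1) ∪ B(p₃,1)))`. -/
def Gamma (p₀ p₁ p₂ p₃ : E3) : ℝ :=
  -δoct * (volume (convexHull ℝ ({p₀, p₁, p₂, p₃} : Set E3))).toReal +
    (volume (convexHull ℝ ({p₀, p₁, p₂, p₃} : Set E3) ∩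
      (Metric.closedBall p₀ 1 ∪ Metric.closedBall p₁ 1 ∪ Metric.closedBall p₂ 1 ∪
        Metric.closedBall p₃ 1))).toReal

open scoped Pointwise

lemma lint_ftc {a b : ℝ} (hab : a ≤ b) (F f : ℝ → ℝ) (hd : ∀ x, HasDerivAt F (f x) x)
    (hc : Continuous f) (hn : ∀ x ∈ Set.Icc a b, 0 ≤ f x) :
    ∫⁻ x in Set.Icc a b, ENNReal.ofReal (f x) = ENNReal.ofReal (F b - F a) := by
  rw [← ofReal_integral_eq_lintegral_ofReal]
  · rw [integral_Icc_eq_integral_Ioc, ← intervalIntegral.integral_of_le hab,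
      intervalIntegral.integral_eq_sub_of_hasDerivAt (fun x _ => hd x) (hc.intervalIntegrable _ _)]
  · exact hc.continuousOn.integrableOn_Icc
  · exact (ae_restrict_iff' measurableSet_Icc).2 (Filter.Eventually.of_forall hn)

/-- The corner of the octahedron, cut into four and intersected with the unit ball. -/
def coneC : Set (ℝ × ℝ × ℝ) :=
  {q | 0 ≤ q.2.1 ∧ 0 ≤ q.2.2 ∧ q.2.1 + q.2.2 ≤ q.1 ∧ q.1 ^ 2 + q.2.1 ^ 2 + q.2.2 ^ 2 ≤ 1}

def coneE : Set (ℝ × ℝ × ℝ) :=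
  {q | 0 ≤ q.1 ∧ 0 ≤ q.2.1 ∧ 0 ≤ q.2.2 ∧ q.2.1 + q.2.2 ≤ 1 ∧
    q.1 ^ 2 * (1 + q.2.1 ^ 2 + q.2.2 ^ 2) ≤ 1}

def triD : Set (ℝ × ℝ) := {q | 0 ≤ q.1 ∧ 0 ≤ q.2 ∧ q.1 + q.2 ≤ 1}

/-- The wedge in coordinates. -/
def wedgeT : Set (ℝ × ℝ × ℝ) :=
  {q | 0 ≤ q.1 ∧ 0 ≤ q.2.1 ∧ q.1 + q.2.1 + |q.2.2| ≤ √2}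

lemma meas_coneC : MeasurableSet coneC := by
  apply IsClosed.measurableSet
  simp only [coneC, Set.ofPred_and]
  refine IsClosed.inter (isClosed_le (by fun_prop) (by fun_prop)) (IsClosed.inter
    (isClosed_le (by fun_prop) (by fun_prop)) (IsClosed.inter
    (isClosed_le (by fun_prop) (by fun_prop)) (isClosed_le (by fun_prop) (by fun_prop))))

lemma meas_coneE : MeasurableSet coneE := by
  apply IsClosed.measurableSet
  simp only [coneE, Set.ofPred_and]
  refine IsClosed.inter (isClosed_le (by fun_prop) (by fun_prop)) (IsClosed.inter
    (isClosed_le (by fun_prop) (by fun_prop)) (IsClosed.inter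
    (isClosed_le (by fun_prop) (by fun_prop)) (IsClosed.inter
    (isClosed_le (by fun_prop) (by fun_prop)) (isClosed_le (by fun_prop) (by fun_prop)))))

lemma meas_triD : MeasurableSet triD := by
  apply IsClosed.measurableSet
  simp only [triD, Set.ofPred_and]
  refine IsClosed.inter (isClosed_le (by fun_prop) (by fun_prop)) (IsClosed.inter
    (isClosed_le (by fun_prop) (by fun_prop)) (isClosed_le (by fun_prop) (by fun_prop)))

lemma meas_wedgeT : MeasurableSet wedgeT := by
  apply IsClosed.measurableSet
  simp only [wedgeT, Set.ofPred_and]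
  refine IsClosed.inter (isClosed_le (by fun_prop) (by fun_prop)) (IsClosed.inter
    (isClosed_le (by fun_prop) (by fun_prop)) (isClosed_le (by fun_prop) (by fun_prop)))

lemma volume_wedgeT : volume wedgeT = ENNReal.ofReal (2 * √2 / 3) := by
  have h2 : √2 ^ 2 = 2 := Real.sq_sqrt (by norm_num)
  have hs : 0 ≤ √2 := Real.sqrt_nonneg 2
  rw [Measure.volume_eq_prod, Measure.prod_apply meas_wedgeT]
  have key : ∀ x : ℝ, volume (Prod.mk x ⁻¹' wedgeT) =
      (Set.Icc 0 (√2)).indicator (fun x => ENNReal.ofReal ((√2 - x) ^ 2)) x := by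
    intro x
    by_cases hx : x ∈ Set.Icc 0 (√2)
    · rw [Set.indicator_of_mem hx, Measure.volume_eq_prod,
        Measure.prod_apply (measurable_prodMk_left meas_wedgeT)]
      have k2 : ∀ y : ℝ, volume (Prod.mk y ⁻¹' (Prod.mk x ⁻¹' wedgeT)) =
          (Set.Icc 0 (√2 - x)).indicator (fun y => ENNReal.ofReal (2 * (√2 - x - y))) y := by
        intro y
        by_cases hy : y ∈ Set.Icc 0 (√2 - x)
        · rw [Set.indicator_of_mem hy]
          have : Prod.mk y ⁻¹' (Prod.mk x ⁻¹' wedgeT) =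
              Set.Icc (-(√2 - x - y)) (√2 - x - y) := by
            ext z
            simp only [wedgeT, Set.mem_preimage, Set.mem_ofPred_eq, Set.mem_Icc]
            rw [← abs_le]
            constructor
            · rintro ⟨_, _, h⟩; linarith
            · intro h; exact ⟨hx.1, hy.1, by linarith⟩
          rw [this, Real.volume_Icc]
          congr 1; ring
        · rw [Set.indicator_of_notMem hy]
          have : Prod.mk y ⁻¹' (Prod.mk x ⁻¹' wedgeT) = ∅ := by
            ext z
            simp only [wedgeT, Set.mem_preimage, Set.mem_ofPred_eq, Set.mem_empty_iff_false,
              iff_false]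
            rintro ⟨_, h1, h⟩
            exact hy ⟨h1, by linarith [abs_nonneg z]⟩
          rw [this, measure_empty]
      simp_rw [k2]
      rw [lintegral_indicator measurableSet_Icc,
        lint_ftc (by linarith [hx.2]) (fun y => 2 * (√2 - x) * y - y ^ 2) _ _ (by fun_prop)]
      · congr 1; ring
      · intro y hy; linarith [hy.2]
      · intro y
        have := ((hasDerivAt_id y).const_mul (2 * (√2 - x))).sub (hasDerivAt_pow 2 y)
        refine this.congr_deriv ?_
        simp; ring
    · rw [Set.indicator_of_notMem hx]
      have : Prod.mk x ⁻¹' wedgeT = ∅ := by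
        ext z
        simp only [wedgeT, Set.mem_preimage, Set.mem_ofPred_eq, Set.mem_empty_iff_false,
          iff_false]
        rintro ⟨h1, h2, h⟩
        exact hx ⟨h1, by linarith [abs_nonneg z.2]⟩
      rw [this, measure_empty]
  simp_rw [key]
  rw [lintegral_indicator measurableSet_Icc,
    lint_ftc hs (fun y => - (√2 - y) ^ 3 / 3) _ _ (by fun_prop)]
  · congr 1; ring_nf; rw [show √2 ^ 3 = √2 ^ 2 * √2 by ring, h2]; ring
  · intro y _; positivity
  · intro y
    have := ((((hasDerivAt_id y).const_sub (√2)).pow 3).neg).div_const 3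
    refine this.congr_deriv ?_
    simp

lemma coneC_slice (t : ℝ) : volume (Prod.mk t ⁻¹' coneC) =
    ∫⁻ w, coneE.indicator (fun q => ENNReal.ofReal (q.1 ^ 2)) (t, w) := by
  have h1 : ∀ w : ℝ × ℝ, coneE.indicator (fun q => ENNReal.ofReal (q.1 ^ 2)) (t, w) =
      (Prod.mk t ⁻¹' coneE).indicator (fun _ => ENNReal.ofReal (t ^ 2)) w := fun w => rfl
  simp_rw [h1]
  rw [lintegral_indicator_const (measurable_prodMk_left meas_coneE)]
  rcases lt_trichotomy t 0 with ht | ht | ht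
  · have e1 : Prod.mk t ⁻¹' coneC = ∅ := by
      ext w
      simp only [coneC, Set.mem_preimage, Set.mem_ofPred_eq, Set.mem_empty_iff_false, iff_false]
      rintro ⟨h1, h2, h3, _⟩
      linarith
    have e2 : Prod.mk t ⁻¹' coneE = ∅ := by
      ext w
      simp only [coneE, Set.mem_preimage, Set.mem_ofPred_eq, Set.mem_empty_iff_false, iff_false]
      rintro ⟨h1, h2, h3, _⟩
      linarith
    rw [e1, e2]; simp
  · have e1 : Prod.mk t ⁻¹' coneC ⊆ {(0, 0)} := by
      rintro ⟨x, y⟩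
      simp only [coneC, Set.mem_preimage, Set.mem_ofPred_eq, Set.mem_singleton_iff, Prod.mk.injEq]
      rintro ⟨h1, h2, h3, _⟩
      constructor <;> linarith
    rw [measure_mono_null e1 (measure_singleton _), ht]; simp
  · have e1 : Prod.mk t ⁻¹' coneC = t • (Prod.mk t ⁻¹' coneE) := by
      ext ⟨x, y⟩
      rw [Set.mem_smul_set_iff_inv_smul_mem₀ ht.ne']
      simp only [coneC, coneE, Set.mem_preimage, Set.mem_ofPred_eq, Prod.smul_mk, smul_eq_mul]
      have a1 : t * (t⁻¹ * x) = x := by field_simp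
      have a2 : t * (t⁻¹ * y) = y := by field_simp
      generalize t⁻¹ * x = u at *
      generalize t⁻¹ * y = v at *
      subst a1 a2
      constructor
      · rintro ⟨h1, h2, h3, h4⟩
        refine ⟨ht.le, nonneg_of_mul_nonneg_right h1 ht, nonneg_of_mul_nonneg_right h2 ht, ?_, ?_⟩
        · by_contra hh; push Not at hh; nlinarith
        · nlinarith
      · rintro ⟨h0, h1, h2, h3, h4⟩
        refine ⟨by positivity, by positivity, by nlinarith, by nlinarith⟩
    rw [e1, Measure.addHaar_smul]
    simp

lemma F_inner (u v : ℝ) : HasDerivAt (fun v => v / ((1 + u ^ 2) * √(1 + u ^ 2 + v ^ 2)) / 3)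
    ((1 / √(1 + u ^ 2 + v ^ 2)) ^ 3 / 3) v := by
  have hp : 0 < 1 + u ^ 2 + v ^ 2 := by positivity
  have h1 : HasDerivAt (fun v => 1 + u ^ 2 + v ^ 2) (2 * v) v := by
    simpa using (hasDerivAt_pow 2 v).const_add (1 + u ^ 2)
  have h2 := ((hasDerivAt_id v).div ((h1.sqrt hp.ne').const_mul (1 + u ^ 2))
    (by positivity)).div_const 3
  refine h2.congr_deriv ?_
  have hs : 0 < √(1 + u ^ 2 + v ^ 2) := by positivity
  have hq : √(1 + u ^ 2 + v ^ 2) ^ 2 = 1 + u ^ 2 + v ^ 2 := Real.sq_sqrt hp.le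
  simp only [id]
  generalize √(1 + u ^ 2 + v ^ 2) = s at *
  have hu : 0 < 1 + u ^ 2 := by positivity
  field_simp
  linear_combination hq

lemma F_outer (u : ℝ) : HasDerivAt (fun u => arctan ((1 + u) / √(2 - 2 * u + 2 * u ^ 2)) / 3)
    ((1 - u) / ((1 + u ^ 2) * √(1 + u ^ 2 + (1 - u) ^ 2)) / 3) u := by
  have hp : 0 < 2 - 2 * u + 2 * u ^ 2 := by nlinarith [sq_nonneg (u - 1), sq_nonneg u]
  have h1 : HasDerivAt (fun u : ℝ => 2 - 2 * u + 2 * u ^ 2) (-2 + 4 * u) u := by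
    have := (((hasDerivAt_id u).const_mul 2).const_sub 2).add ((hasDerivAt_pow 2 u).const_mul 2)
    refine this.congr_deriv ?_
    simp; ring
  have h2 := ((((hasDerivAt_id u).const_add 1).div (h1.sqrt hp.ne') (by positivity)).arctan).div_const 3
  refine h2.congr_deriv ?_
  rw [show 1 + u ^ 2 + (1 - u) ^ 2 = 2 - 2 * u + 2 * u ^ 2 by ring]
  have hs : 0 < √(2 - 2 * u + 2 * u ^ 2) := by positivity
  have hq : √(2 - 2 * u + 2 * u ^ 2) ^ 2 = 2 - 2 * u + 2 * u ^ 2 := Real.sq_sqrt hp.le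
  simp only [id, Pi.div_apply]
  generalize √(2 - 2 * u + 2 * u ^ 2) = s at *
  have hu : 0 < 1 + u ^ 2 := by positivity
  have e1 : 1 + ((1 + u) / s) ^ 2 = 3 * (1 + u ^ 2) / s ^ 2 := by
    field_simp; linear_combination hq
  rw [e1]
  field_simp
  linear_combination (2 : ℝ) * hq

lemma arctan_val : (arctan ((1 + 1) / √(2 - 2 * 1 + 2 * 1 ^ 2)) / 3 -
    arctan ((1 + 0) / √(2 - 2 * 0 + 2 * 0 ^ 2)) / 3) = (4 * arccos (1 / √3) - π) / 6 := by
  have h2 : √2 ^ 2 = 2 := Real.sq_sqrt (by norm_num)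
  have hs : 0 < √2 := by positivity
  have h3 : √3 ^ 2 = 3 := Real.sq_sqrt (by norm_num)
  have hs3 : 0 < √3 := by positivity
  have e : arccos (1 / √3) = arctan (√2) := by
    rw [arccos_eq_arctan (by positivity)]
    congr 1
    rw [div_pow, h3, show (1:ℝ) - 1 ^ 2 / 3 = 2 / 3 by norm_num, Real.sqrt_div (by norm_num)]
    field_simp
  have e1 : ((1 + 1) / √(2 - 2 * 1 + 2 * 1 ^ 2) : ℝ) = √2 := by
    norm_num
  have e2 : ((1 + 0) / √(2 - 2 * 0 + 2 * 0 ^ 2) : ℝ) = (√2)⁻¹ := by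
    norm_num
  rw [e, e1, e2, arctan_inv_of_pos hs]
  ring

set_option maxHeartbeats 1000000 in
lemma volume_coneC : volume coneC = ENNReal.ofReal ((4 * arccos (1 / √3) - π) / 6) := by
  rw [Measure.volume_eq_prod, Measure.prod_apply meas_coneC]
  simp_rw [coneC_slice]
  rw [lintegral_lintegral_swap]
  swap
  · refine (Measurable.indicator (by fun_prop) meas_coneE).aemeasurable
  have k1 : ∀ w : ℝ × ℝ, ∫⁻ t, coneE.indicator (fun q => ENNReal.ofReal (q.1 ^ 2)) (t, w) =
      triD.indicator (fun w => ENNReal.ofReal ((1 / √(1 + w.1 ^ 2 + w.2 ^ 2)) ^ 3 / 3)) w := by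
    rintro ⟨u, v⟩
    have hp : 0 < 1 + u ^ 2 + v ^ 2 := by positivity
    have hs : 0 < √(1 + u ^ 2 + v ^ 2) := by positivity
    have hq : √(1 + u ^ 2 + v ^ 2) ^ 2 = 1 + u ^ 2 + v ^ 2 := Real.sq_sqrt hp.le
    by_cases hw : (u, v) ∈ triD
    · rw [Set.indicator_of_mem hw]
      have : ∀ t : ℝ, coneE.indicator (fun q => ENNReal.ofReal (q.1 ^ 2)) (t, (u, v)) =
          (Set.Icc 0 (1 / √(1 + u ^ 2 + v ^ 2))).indicator (fun t => ENNReal.ofReal (t ^ 2)) t := by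
        intro t
        have hiff : (t, (u, v)) ∈ coneE ↔ t ∈ Set.Icc 0 (1 / √(1 + u ^ 2 + v ^ 2)) := by
          obtain ⟨w1, w2, w3⟩ := hw
          simp only [coneE, Set.mem_ofPred_eq, Set.mem_Icc]
          rw [le_div_iff₀ hs]
          simp only at w1 w2 w3
          constructor
          · rintro ⟨h0, _, _, _, h⟩
            refine ⟨h0, ?_⟩
            rw [← hq, ← mul_pow] at h
            exact (sq_le_one_iff₀ (by positivity)).1 h
          · rintro ⟨h0, h⟩
            refine ⟨h0, w1, w2, w3, ?_⟩
            rw [← hq, ← mul_pow]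
            exact (sq_le_one_iff₀ (by positivity)).2 h
        by_cases ht : (t, (u, v)) ∈ coneE
        · rw [Set.indicator_of_mem ht, Set.indicator_of_mem (hiff.1 ht)]
        · rw [Set.indicator_of_notMem ht, Set.indicator_of_notMem (fun h => ht (hiff.2 h))]
      simp_rw [this]
      rw [lintegral_indicator measurableSet_Icc,
        lint_ftc (by positivity) (fun y => y ^ 3 / 3) _ _ (by fun_prop)]
      · simp
      · intro y _; positivity
      · intro y
        have := (hasDerivAt_pow 3 y).div_const 3
        refine this.congr_deriv ?_
        simp
    · rw [Set.indicator_of_notMem hw]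
      have : ∀ t : ℝ, coneE.indicator (fun q => ENNReal.ofReal (q.1 ^ 2)) (t, (u, v)) = 0 := by
        intro t
        refine Set.indicator_of_notMem ?_ _
        rintro ⟨_, h1, h2, h3, _⟩
        exact hw ⟨h1, h2, h3⟩
      simp_rw [this]
      simp
  simp_rw [k1]
  have hc : Continuous (fun w : ℝ × ℝ => (1 / √(1 + w.1 ^ 2 + w.2 ^ 2)) ^ 3 / 3) := by
    refine Continuous.div_const (Continuous.pow (Continuous.div continuous_const (by fun_prop) ?_) _) _
    intro w
    have : 0 < 1 + w.1 ^ 2 + w.2 ^ 2 := by positivity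
    positivity
  rw [Measure.volume_eq_prod, lintegral_prod]
  swap
  · exact (Measurable.indicator (ENNReal.measurable_ofReal.comp hc.measurable)
      meas_triD).aemeasurable
  have k2 : ∀ u : ℝ, ∫⁻ v, triD.indicator
      (fun w => ENNReal.ofReal ((1 / √(1 + w.1 ^ 2 + w.2 ^ 2)) ^ 3 / 3)) (u, v) =
      (Set.Icc 0 1).indicator (fun u => ENNReal.ofReal
        ((1 - u) / ((1 + u ^ 2) * √(1 + u ^ 2 + (1 - u) ^ 2)) / 3)) u := by
    intro u
    by_cases hu : u ∈ Set.Icc (0 : ℝ) 1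
    · rw [Set.indicator_of_mem hu]
      have : ∀ v : ℝ, triD.indicator
          (fun w => ENNReal.ofReal ((1 / √(1 + w.1 ^ 2 + w.2 ^ 2)) ^ 3 / 3)) (u, v) =
          (Set.Icc 0 (1 - u)).indicator
            (fun v => ENNReal.ofReal ((1 / √(1 + u ^ 2 + v ^ 2)) ^ 3 / 3)) v := by
        intro v
        have hiff : (u, v) ∈ triD ↔ v ∈ Set.Icc 0 (1 - u) := by
          simp only [triD, Set.mem_ofPred_eq, Set.mem_Icc]
          constructor
          · rintro ⟨_, h, h'⟩; exact ⟨h, by linarith⟩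
          · rintro ⟨h, h'⟩; exact ⟨hu.1, h, by linarith⟩
        by_cases ht : (u, v) ∈ triD
        · rw [Set.indicator_of_mem ht, Set.indicator_of_mem (hiff.1 ht)]
        · rw [Set.indicator_of_notMem ht, Set.indicator_of_notMem (fun h => ht (hiff.2 h))]
      simp_rw [this]
      rw [lintegral_indicator measurableSet_Icc,
        lint_ftc (by linarith [hu.2]) _ _ (F_inner u)]
      · simp
      · have hcc := hc.comp (Continuous.prodMk_right (X := ℝ) (Y := ℝ) u)
        exact hcc
      · intro y _; positivity
    · rw [Set.indicator_of_notMem hu]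
      have : ∀ v : ℝ, triD.indicator
          (fun w => ENNReal.ofReal ((1 / √(1 + w.1 ^ 2 + w.2 ^ 2)) ^ 3 / 3)) (u, v) = 0 := by
        intro t
        refine Set.indicator_of_notMem ?_ _
        rintro ⟨h1, h2, h3⟩
        simp only at h1 h2 h3
        exact hu ⟨h1, by linarith⟩
      simp_rw [this]
      simp
  simp_rw [k2]
  rw [lintegral_indicator measurableSet_Icc, lint_ftc zero_le_one _ _ F_outer]
  · rw [arctan_val]
  · refine Continuous.div_const (Continuous.div (by fun_prop) (by fun_prop) ?_) _
    intro u
    have : 0 < 1 + u ^ 2 + (1 - u) ^ 2 := by positivity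
    positivity
  · intro u hu
    have : 0 ≤ 1 - u := by linarith [hu.2]
    positivity

set_option linter.unusedSimpArgs false

def ON3 (a b c : E3) : Prop :=
  inner ℝ a a = 1 ∧ inner ℝ b b = 1 ∧ inner ℝ c c = 1 ∧
    inner ℝ a b = 0 ∧ inner ℝ a c = 0 ∧ inner ℝ b c = 0

lemma ON3.orthonormal {a b c : E3} (h : ON3 a b c) : Orthonormal ℝ ![a, b, c] := by
  obtain ⟨h1, h2, h3, h4, h5, h6⟩ := h
  rw [orthonormal_iff_ite]
  intro i j
  fin_cases i <;> fin_cases j <;> simp only [] <;>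
    first
    | simpa using h1
    | simpa using h2
    | simpa using h3
    | simpa using h4
    | simpa using h5
    | simpa using h6
    | (rw [real_inner_comm]; simpa using h4)
    | (rw [real_inner_comm]; simpa using h5)
    | (rw [real_inner_comm]; simpa using h6)

lemma ON3.exists_basis {a b c : E3} (h : ON3 a b c) :
    ∃ B : OrthonormalBasis (Fin 3) ℝ E3, B 0 = a ∧ B 1 = b ∧ B 2 = c := by
  have hc : Fintype.card (Fin 3) = Module.finrank ℝ E3 := by simp
  have hb := coe_basisOfOrthonormalOfCardEqFinrank h.orthonormal hc
  refine ⟨(basisOfOrthonormalOfCardEqFinrank h.orthonormal hc).toOrthonormalBasis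
    (by rw [hb]; exact h.orthonormal), ?_⟩
  simp [hb]

def coordMap (a b c o p : E3) : ℝ × ℝ × ℝ :=
  (inner ℝ a (p - o), inner ℝ b (p - o), inner ℝ c (p - o))

lemma coordMap_mp {a b c : E3} (h : ON3 a b c) (o : E3) :
    MeasurePreserving (coordMap a b c o) volume volume := by
  obtain ⟨B, rfl, rfl, rfl⟩ := h.exists_basis
  have m1 := measurePreserving_sub_right (volume : Measure E3) o
  have m2 := B.measurePreserving_repr
  have m3 := PiLp.volume_preserving_ofLp (Fin 3)
  have m4 := volume_preserving_piFinSuccAbove (fun _ : Fin 3 => ℝ) 0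
  have m5 := (MeasurePreserving.id (volume : Measure ℝ)).prod (volume_preserving_finTwoArrow ℝ)
  have m := m5.comp (m4.comp (m3.comp (m2.comp m1)))
  have e : coordMap (B 0) (B 1) (B 2) o = (Prod.map id MeasurableEquiv.finTwoArrow ∘
      (MeasurableEquiv.piFinSuccAbove (fun _ : Fin 3 => ℝ) 0) ∘ WithLp.ofLp ∘ B.repr ∘
        fun x => x - o) := by
    funext p
    simp only [coordMap, Function.comp, Prod.map, id, MeasurableEquiv.piFinSuccAbove,
      MeasurableEquiv.finTwoArrow]
    simp [OrthonormalBasis.repr_apply_apply, Fin.removeNth, Fin.tail, inner_sub_right]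
  rw [e]
  exact m

lemma ball_iff {a b c : E3} (h : ON3 a b c) (q p : E3) :
    p ∈ Metric.closedBall q 1 ↔
      inner ℝ a (p - q) ^ 2 + inner ℝ b (p - q) ^ 2 + inner ℝ c (p - q) ^ 2 ≤ 1 := by
  obtain ⟨B, rfl, rfl, rfl⟩ := h.exists_basis
  have := B.sum_sq_norm_inner_right (p - q)
  simp only [Fin.sum_univ_three, Real.norm_eq_abs, sq_abs] at this
  rw [this, Metric.mem_closedBall, dist_eq_norm, sq_le_one_iff₀ (norm_nonneg _)]

lemma expand {a b c : E3} (h : ON3 a b c) (w : E3) :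
    w = (inner ℝ a w : ℝ) • a + (inner ℝ b w : ℝ) • b + (inner ℝ c w : ℝ) • c := by
  obtain ⟨B, rfl, rfl, rfl⟩ := h.exists_basis
  have := B.sum_repr' w
  rw [Fin.sum_univ_three] at this
  exact this.symm

lemma hull_eq {a b c : E3} (h : ON3 a b c) (o : E3) :
    convexHull ℝ ({o + √2 • c, o - √2 • c, o + √2 • a, o + √2 • b} : Set E3) =
      coordMap a b c o ⁻¹' wedgeT := by
  have hs : 0 < √2 := by positivity
  have h' := h
  obtain ⟨h1, h2, h3, h4, h5, h6⟩ := h'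
  have h4' : inner ℝ b a = 0 := by rw [real_inner_comm]; exact h4
  have h5' : inner ℝ c a = 0 := by rw [real_inner_comm]; exact h5
  have h6' : inner ℝ c b = 0 := by rw [real_inner_comm]; exact h6
  apply Set.Subset.antisymm
  · apply convexHull_min
    · intro p hp
      simp only [Set.mem_insert_iff, Set.mem_singleton_iff] at hp
      rcases hp with rfl | rfl | rfl | rfl <;>
        simp [coordMap, wedgeT, inner_smul_right, -inner_self_eq_norm_sq_to_K, h1, h2, h3, h4, h5, h6, h4', h5', h6',
          abs_of_pos hs, sub_eq_add_neg, inner_add_right, inner_neg_right]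
    · have hT : Convex ℝ wedgeT := by
        rintro ⟨x, y, z⟩ ⟨q1, q2, q3⟩ ⟨x', y', z'⟩ ⟨r1, r2, r3⟩ s t hs ht hst
        simp only [wedgeT, Set.mem_ofPred_eq, Prod.smul_mk, Prod.mk_add_mk, smul_eq_mul] at *
        refine ⟨by positivity, by positivity, ?_⟩
        have : |s * z + t * z'| ≤ s * |z| + t * |z'| := by
          refine (abs_add_le _ _).trans ?_
          rw [abs_mul, abs_mul, abs_of_nonneg hs, abs_of_nonneg ht]
        nlinarith [mul_le_mul_of_nonneg_left q3 hs, mul_le_mul_of_nonneg_left r3 ht]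
      intro p hp q hq s t hs ht hst
      have hh := hT hp hq hs ht hst
      simp only [Set.mem_preimage] at hh ⊢
      convert hh using 1
      have e : s • p + t • q - o = s • (p - o) + t • (q - o) := by
        have : o = (s + t) • o := by rw [hst, one_smul]
        nth_rewrite 1 [this]
        module
      simp only [coordMap, e, inner_add_right, inner_smul_right, Prod.smul_mk, Prod.mk_add_mk,
        smul_eq_mul]
  · intro p hp
    have he := expand h (p - o)
    simp only [coordMap, wedgeT, Set.mem_preimage, Set.mem_ofPred_eq] at hp
    generalize (inner ℝ a (p - o) : ℝ) = x at *
    generalize (inner ℝ b (p - o) : ℝ) = y at *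
    generalize (inner ℝ c (p - o) : ℝ) = z at *
    obtain ⟨hx, hy, hz⟩ := hp
    have hz1 := le_abs_self z
    have hz2 := neg_abs_le z
    have hp : p = ((1 - (x + y - z) / √2) / 2) • (o + √2 • c) +
        ((1 - (x + y + z) / √2) / 2) • (o - √2 • c) + (x / √2) • (o + √2 • a) +
        (y / √2) • (o + √2 • b) := by
      have hx' : x = (x / √2) * √2 := by field_simp
      have hy' : y = (y / √2) * √2 := by field_simp
      have hz' : z = (z / √2) * √2 := by field_simp
      have e1 : (x + y - z) / √2 = x / √2 + y / √2 - z / √2 := by ring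
      have e2 : (x + y + z) / √2 = x / √2 + y / √2 + z / √2 := by ring
      rw [e1, e2]
      rw [sub_eq_iff_eq_add] at he
      rw [he]
      generalize x / √2 = x1 at *
      generalize y / √2 = y1 at *
      generalize z / √2 = z1 at *
      rw [hx', hy', hz']
      module
    have w1 : 0 ≤ (1 - (x + y - z) / √2) / 2 := by
      have : (x + y - z) / √2 ≤ 1 := by rw [div_le_one hs]; linarith
      linarith
    have w2 : 0 ≤ (1 - (x + y + z) / √2) / 2 := by
      have : (x + y + z) / √2 ≤ 1 := by rw [div_le_one hs]; linarith
      linarith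
    have w3 : 0 ≤ x / √2 := by positivity
    have w4 : 0 ≤ y / √2 := by positivity
    have hsum : (1 - (x + y - z) / √2) / 2 + (1 - (x + y + z) / √2) / 2 + x / √2 + y / √2 = 1 := by
      ring
    generalize (1 - (x + y - z) / √2) / 2 = k1 at *
    generalize (1 - (x + y + z) / √2) / 2 = k2 at *
    generalize x / √2 = k3 at *
    generalize y / √2 = k4 at *
    rw [hp]
    have hcv := convex_convexHull ℝ ({o + √2 • c, o - √2 • c, o + √2 • a, o + √2 • b} : Set E3)
    have := hcv.sum_mem (t := Finset.univ) (w := ![k1, k2, k3, k4])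
      (z := ![o + √2 • c, o - √2 • c, o + √2 • a, o + √2 • b])
      (by intro i _; fin_cases i <;> simpa) (by simp [Fin.sum_univ_four, hsum])
      (by intro i _; apply subset_convexHull; fin_cases i <;> simp)
    simpa [Fin.sum_univ_four] using this

lemma core {a b c : E3} (h : ON3 a b c) (o : E3) :
    volume (convexHull ℝ ({o + √2 • c, o - √2 • c, o + √2 • a, o + √2 • b} : Set E3)) =
      ENNReal.ofReal (2 * √2 / 3) ∧
    volume (convexHull ℝ ({o + √2 • c, o - √2 • c, o + √2 • a, o + √2 • b} : Set E3) ∩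
      (Metric.closedBall (o + √2 • c) 1 ∪ Metric.closedBall (o - √2 • c) 1 ∪
        Metric.closedBall (o + √2 • a) 1 ∪ Metric.closedBall (o + √2 • b) 1)) =
      6 * ENNReal.ofReal ((4 * arccos (1 / √3) - π) / 6) := by
  have hs : 0 < √2 := by positivity
  have hs2 : √2 ^ 2 = 2 := Real.sq_sqrt (by norm_num)
  have hs1 : 1 < √2 := by nlinarith
  rw [hull_eq h]
  refine ⟨?_, ?_⟩
  · rw [(coordMap_mp h o).measure_preimage meas_wedgeT.nullMeasurableSet, volume_wedgeT]
  have h' := h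
  obtain ⟨h1, h2, h3, h4, h5, h6⟩ := h'
  have h4' : inner ℝ b a = 0 := by rw [real_inner_comm]; exact h4
  have h5' : inner ℝ c a = 0 := by rw [real_inner_comm]; exact h5
  have h6' : inner ℝ c b = 0 := by rw [real_inner_comm]; exact h6
  have f0 : ON3 (-c) a b := by
    refine ⟨?_, ?_, ?_, ?_, ?_, ?_⟩ <;> simp only [inner_neg_left, inner_neg_right, neg_neg, h1, h2, h3, h4, h5, h6, h4', h5', h6', neg_zero]
  have f1 : ON3 c a b := by
    refine ⟨?_, ?_, ?_, ?_, ?_, ?_⟩ <;> simp only [inner_neg_left, inner_neg_right, neg_neg, h1, h2, h3, h4, h5, h6, h4', h5', h6', neg_zero]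
  have f2 : ON3 (-a) b c := by
    refine ⟨?_, ?_, ?_, ?_, ?_, ?_⟩ <;> simp only [inner_neg_left, inner_neg_right, neg_neg, h1, h2, h3, h4, h5, h6, h4', h5', h6', neg_zero]
  have f3 : ON3 (-a) b (-c) := by
    refine ⟨?_, ?_, ?_, ?_, ?_, ?_⟩ <;> simp only [inner_neg_left, inner_neg_right, neg_neg, h1, h2, h3, h4, h5, h6, h4', h5', h6', neg_zero]
  have f4 : ON3 (-b) a c := by
    refine ⟨?_, ?_, ?_, ?_, ?_, ?_⟩ <;> simp only [inner_neg_left, inner_neg_right, neg_neg, h1, h2, h3, h4, h5, h6, h4', h5', h6', neg_zero]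
  have f5 : ON3 (-b) a (-c) := by
    refine ⟨?_, ?_, ?_, ?_, ?_, ?_⟩ <;> simp only [inner_neg_left, inner_neg_right, neg_neg, h1, h2, h3, h4, h5, h6, h4', h5', h6', neg_zero]
  have vol : ∀ {a b c : E3} (_ : ON3 a b c) (q : E3),
      volume (coordMap a b c q ⁻¹' coneC) = ENNReal.ofReal ((4 * arccos (1 / √3) - π) / 6) := by
    intro a b c h q
    rw [(coordMap_mp h q).measure_preimage meas_coneC.nullMeasurableSet, volume_coneC]
  have ms : ∀ {a b c : E3} (_ : ON3 a b c) (q : E3),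
      NullMeasurableSet (coordMap a b c q ⁻¹' coneC) volume := by
    intro a b c h q
    exact ((coordMap_mp h q).measurable meas_coneC).nullMeasurableSet
  set A0 := coordMap (-c) a b (o + √2 • c) ⁻¹' coneC with hA0
  set A1 := coordMap c a b (o - √2 • c) ⁻¹' coneC with hA1
  set A2 := coordMap (-a) b c (o + √2 • a) ⁻¹' coneC with hA2
  set A3 := coordMap (-a) b (-c) (o + √2 • a) ⁻¹' coneC with hA3
  set A4 := coordMap (-b) a c (o + √2 • b) ⁻¹' coneC with hA4
  set A5 := coordMap (-b) a (-c) (o + √2 • b) ⁻¹' coneC with hA5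
  -- coordinates
  have ic : ∀ p : E3, p - (o + √2 • c) = (p - o) - √2 • c := fun p => by abel
  have ic' : ∀ p : E3, p - (o - √2 • c) = (p - o) + √2 • c := fun p => by abel
  have ia : ∀ p : E3, p - (o + √2 • a) = (p - o) - √2 • a := fun p => by abel
  have ib : ∀ p : E3, p - (o + √2 • b) = (p - o) - √2 • b := fun p => by abel
  let x : E3 → ℝ := fun p => inner ℝ a (p - o)
  let y : E3 → ℝ := fun p => inner ℝ b (p - o)
  let z : E3 → ℝ := fun p => inner ℝ c (p - o)
  have m0 : ∀ p, p ∈ A0 ↔ 0 ≤ x p ∧ 0 ≤ y p ∧ x p + y p ≤ √2 - z p ∧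
      (√2 - z p) ^ 2 + x p ^ 2 + y p ^ 2 ≤ 1 := by
    intro p
    simp only [hA0, coordMap, coneC, Set.mem_preimage, Set.mem_ofPred_eq, ic, inner_sub_right,
      inner_neg_left, inner_smul_right, h1, h2, h3, h4, h5, h6, h4', h5', h6', x, y, z]
    ring_nf
  have m1 : ∀ p, p ∈ A1 ↔ 0 ≤ x p ∧ 0 ≤ y p ∧ x p + y p ≤ √2 + z p ∧
      (√2 + z p) ^ 2 + x p ^ 2 + y p ^ 2 ≤ 1 := by
    intro p
    simp only [hA1, coordMap, coneC, Set.mem_preimage, Set.mem_ofPred_eq, ic', inner_sub_right,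
      inner_add_right,
      inner_neg_left, inner_smul_right, h1, h2, h3, h4, h5, h6, h4', h5', h6', x, y, z]
    ring_nf
  have m2 : ∀ p, p ∈ A2 ↔ 0 ≤ y p ∧ 0 ≤ z p ∧ y p + z p ≤ √2 - x p ∧
      (√2 - x p) ^ 2 + y p ^ 2 + z p ^ 2 ≤ 1 := by
    intro p
    simp only [hA2, coordMap, coneC, Set.mem_preimage, Set.mem_ofPred_eq, ia, inner_sub_right,
      inner_neg_left, inner_smul_right, h1, h2, h3, h4, h5, h6, h4', h5', h6', x, y, z]
    ring_nf
  have m3 : ∀ p, p ∈ A3 ↔ 0 ≤ y p ∧ 0 ≤ -z p ∧ y p - z p ≤ √2 - x p ∧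
      (√2 - x p) ^ 2 + y p ^ 2 + z p ^ 2 ≤ 1 := by
    intro p
    simp only [hA3, coordMap, coneC, Set.mem_preimage, Set.mem_ofPred_eq, ia, inner_sub_right,
      inner_neg_left, inner_smul_right, h1, h2, h3, h4, h5, h6, h4', h5', h6', x, y, z]
    ring_nf
  have m4 : ∀ p, p ∈ A4 ↔ 0 ≤ x p ∧ 0 ≤ z p ∧ x p + z p ≤ √2 - y p ∧
      (√2 - y p) ^ 2 + x p ^ 2 + z p ^ 2 ≤ 1 := by
    intro p
    simp only [hA4, coordMap, coneC, Set.mem_preimage, Set.mem_ofPred_eq, ib, inner_sub_right,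
      inner_neg_left, inner_smul_right, h1, h2, h3, h4, h5, h6, h4', h5', h6', x, y, z]
    ring_nf
  have m5 : ∀ p, p ∈ A5 ↔ 0 ≤ x p ∧ 0 ≤ -z p ∧ x p - z p ≤ √2 - y p ∧
      (√2 - y p) ^ 2 + x p ^ 2 + z p ^ 2 ≤ 1 := by
    intro p
    simp only [hA5, coordMap, coneC, Set.mem_preimage, Set.mem_ofPred_eq, ib, inner_sub_right,
      inner_neg_left, inner_smul_right, h1, h2, h3, h4, h5, h6, h4', h5', h6', x, y, z]
    ring_nf
  have b0 : ∀ p, p ∈ Metric.closedBall (o + √2 • c) 1 ↔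
      (√2 - z p) ^ 2 + x p ^ 2 + y p ^ 2 ≤ 1 := by
    intro p
    rw [ball_iff h]
    simp only [ic, inner_sub_right, inner_smul_right, h1, h2, h3, h4, h5, h6, h4', h5', h6', x, y, z]
    ring_nf
  have b1 : ∀ p, p ∈ Metric.closedBall (o - √2 • c) 1 ↔
      (√2 + z p) ^ 2 + x p ^ 2 + y p ^ 2 ≤ 1 := by
    intro p
    rw [ball_iff h]
    simp only [ic', inner_sub_right, inner_add_right, inner_smul_right, h1, h2, h3, h4, h5, h6, h4', h5', h6', x, y, z]
    ring_nf
  have b2 : ∀ p, p ∈ Metric.closedBall (o + √2 • a) 1 ↔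
      (√2 - x p) ^ 2 + y p ^ 2 + z p ^ 2 ≤ 1 := by
    intro p
    rw [ball_iff h]
    simp only [ia, inner_sub_right, inner_smul_right, h1, h2, h3, h4, h5, h6, h4', h5', h6', x, y, z]
    ring_nf
  have b3 : ∀ p, p ∈ Metric.closedBall (o + √2 • b) 1 ↔
      (√2 - y p) ^ 2 + x p ^ 2 + z p ^ 2 ≤ 1 := by
    intro p
    rw [ball_iff h]
    simp only [ib, inner_sub_right, inner_smul_right, h1, h2, h3, h4, h5, h6, h4', h5', h6', x, y, z]
    ring_nf
  have mT : ∀ p, p ∈ coordMap a b c o ⁻¹' wedgeT ↔ 0 ≤ x p ∧ 0 ≤ y p ∧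
      x p + y p + |z p| ≤ √2 := fun p => Iff.rfl
  have bd : ∀ u v w : ℝ, (√2 - u) ^ 2 + v ^ 2 + w ^ 2 ≤ 1 → √2 - u ≤ 1 := by
    intro u v w hh
    nlinarith [sq_nonneg v, sq_nonneg w]
  have hset : coordMap a b c o ⁻¹' wedgeT ∩
      (Metric.closedBall (o + √2 • c) 1 ∪ Metric.closedBall (o - √2 • c) 1 ∪
        Metric.closedBall (o + √2 • a) 1 ∪ Metric.closedBall (o + √2 • b) 1) =
      A0 ∪ A1 ∪ A2 ∪ A3 ∪ A4 ∪ A5 := by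
    ext p
    simp only [Set.mem_inter_iff, Set.mem_union, m0, m1, m2, m3, m4, m5, b0, b1, b2, b3, mT]
    generalize x p = x
    generalize y p = y
    generalize z p = z
    constructor
    · rintro ⟨⟨k1, k2, k3⟩, ((hb | hb) | hb) | hb⟩
      · exact Or.inl (Or.inl (Or.inl (Or.inl (Or.inl ⟨k1, k2, by linarith [le_abs_self z], hb⟩))))
      · exact Or.inl (Or.inl (Or.inl (Or.inl (Or.inr ⟨k1, k2, by linarith [neg_abs_le z], hb⟩))))
      · rcases le_total 0 z with hz | hz
        · exact Or.inl (Or.inl (Or.inl (Or.inr ⟨k2, hz, by linarith [le_abs_self z], hb⟩)))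
        · exact Or.inl (Or.inl (Or.inr ⟨k2, by linarith, by linarith [neg_abs_le z], hb⟩))
      · rcases le_total 0 z with hz | hz
        · exact Or.inl (Or.inr ⟨k1, hz, by linarith [le_abs_self z], hb⟩)
        · exact Or.inr ⟨k1, by linarith, by linarith [neg_abs_le z], hb⟩
    · rintro (((((⟨k1, k2, k3, hb⟩ | ⟨k1, k2, k3, hb⟩) | ⟨k1, k2, k3, hb⟩) | ⟨k1, k2, k3, hb⟩) |
        ⟨k1, k2, k3, hb⟩) | ⟨k1, k2, k3, hb⟩)
      · have := bd _ _ _ hb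
        refine ⟨⟨k1, k2, ?_⟩, Or.inl (Or.inl (Or.inl hb))⟩
        rw [abs_of_nonneg (by linarith)]; linarith
      · have := bd (-z) x y (by simpa using hb)
        refine ⟨⟨k1, k2, ?_⟩, Or.inl (Or.inl (Or.inr hb))⟩
        rw [abs_of_nonpos (by linarith)]; linarith
      · have := bd _ _ _ hb
        refine ⟨⟨by linarith, k1, ?_⟩, Or.inl (Or.inr hb)⟩
        rw [abs_of_nonneg k2]; linarith
      · have := bd _ _ _ hb
        refine ⟨⟨by linarith, k1, ?_⟩, Or.inl (Or.inr hb)⟩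
        rw [abs_of_nonpos (by linarith)]; linarith
      · have := bd _ _ _ hb
        refine ⟨⟨k1, by linarith, ?_⟩, Or.inr hb⟩
        rw [abs_of_nonneg k2]; linarith
      · have := bd _ _ _ hb
        refine ⟨⟨k1, by linarith, ?_⟩, Or.inr hb⟩
        rw [abs_of_nonpos (by linarith)]; linarith
  -- the coordinate planes are null
  have hnull : ∀ {a b c : E3} (_ : ON3 a b c),
      volume {p : E3 | inner ℝ a (p - o) = (0 : ℝ)} = 0 := by
    intro a b c h
    have e : {p : E3 | inner ℝ a (p - o) = (0 : ℝ)} =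
        coordMap a b c o ⁻¹' (({0} : Set ℝ) ×ˢ Set.univ) := by
      ext p; simp [coordMap]
    rw [e, (coordMap_mp h o).measure_preimage
      ((measurableSet_singleton _).prod MeasurableSet.univ).nullMeasurableSet,
      Measure.volume_eq_prod, Measure.prod_prod]
    simp
  have g1 : ON3 b a c := ⟨h2, h1, h3, h4', h6, h5⟩
  have hN : volume ({p | x p = 0} ∪ {p | y p = 0} ∪ {p | z p = 0}) = 0 :=
    measure_union_null (measure_union_null (hnull h) (hnull g1)) (hnull f1)
  have sep : ∀ u v w : ℝ, (√2 - u) ^ 2 + v ^ 2 + w ^ 2 ≤ 1 →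
      (√2 - v) ^ 2 + u ^ 2 + w ^ 2 ≤ 1 → w = 0 := by
    intro u v w k1 k2
    have : w ^ 2 ≤ 0 := by nlinarith [sq_nonneg (2 * u - √2), sq_nonneg (2 * v - √2)]
    exact pow_eq_zero_iff (two_ne_zero) |>.1 (le_antisymm this (sq_nonneg w))
  have sep' : ∀ u v w : ℝ, (√2 + u) ^ 2 + v ^ 2 + w ^ 2 ≤ 1 →
      (√2 - v) ^ 2 + u ^ 2 + w ^ 2 ≤ 1 → w = 0 := by
    intro u v w k1 k2
    exact sep (-u) v w (by simpa using k1) (by simpa using k2)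
  have hd : ∀ S T : Set E3, (∀ p, p ∈ S → p ∈ T → x p = 0 ∨ y p = 0 ∨ z p = 0) →
      AEDisjoint volume S T := by
    intro S T hST
    refine measure_mono_null ?_ hN
    rintro p ⟨hp1, hp2⟩
    rcases hST p hp1 hp2 with k | k | k
    · exact Or.inl (Or.inl k)
    · exact Or.inl (Or.inr k)
    · exact Or.inr k
  rw [hset]
  rw [measure_union₀ (ms f5 _), measure_union₀ (ms f4 _), measure_union₀ (ms f3 _),
    measure_union₀ (ms f2 _), measure_union₀ (ms f1 _), vol f0, vol f1, vol f2, vol f3, vol f4,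
    vol f5]
  · ring
  · apply hd
    intro p hp hq
    rw [m0] at hp
    rw [m1] at hq
    nlinarith [sq_nonneg (x p), sq_nonneg (y p), sq_nonneg (z p)]
  · apply hd
    rintro p (hp | hp) hq
    · rw [m0] at hp
      rw [m2] at hq
      exact Or.inr (Or.inl (sep (z p) (x p) (y p) (by linarith [hp.2.2.2]) (by linarith [hq.2.2.2])))
    · rw [m1] at hp
      rw [m2] at hq
      exact Or.inr (Or.inl (sep' (z p) (x p) (y p) (by linarith [hp.2.2.2]) (by linarith [hq.2.2.2])))
  · apply hd
    rintro p ((hp | hp) | hp) hq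
    · rw [m0] at hp
      rw [m3] at hq
      exact Or.inr (Or.inl (sep (z p) (x p) (y p) (by linarith [hp.2.2.2]) (by linarith [hq.2.2.2])))
    · rw [m1] at hp
      rw [m3] at hq
      exact Or.inr (Or.inl (sep' (z p) (x p) (y p) (by linarith [hp.2.2.2]) (by linarith [hq.2.2.2])))
    · rw [m2] at hp
      rw [m3] at hq
      exact Or.inr (Or.inr (by linarith [hp.2.1, hq.2.1]))
  · apply hd
    rintro p (((hp | hp) | hp) | hp) hq
    · rw [m0] at hp
      rw [m4] at hq
      exact Or.inl (sep (z p) (y p) (x p) (by linarith [hp.2.2.2]) (by linarith [hq.2.2.2]))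
    · rw [m1] at hp
      rw [m4] at hq
      exact Or.inl (sep' (z p) (y p) (x p) (by linarith [hp.2.2.2]) (by linarith [hq.2.2.2]))
    · rw [m2] at hp
      rw [m4] at hq
      exact Or.inr (Or.inr (sep (x p) (y p) (z p) hp.2.2.2 hq.2.2.2))
    · rw [m3] at hp
      rw [m4] at hq
      exact Or.inr (Or.inr (sep (x p) (y p) (z p) hp.2.2.2 hq.2.2.2))
  · apply hd
    rintro p ((((hp | hp) | hp) | hp) | hp) hq
    · rw [m0] at hp
      rw [m5] at hq
      exact Or.inl (sep (z p) (y p) (x p) (by linarith [hp.2.2.2]) (by linarith [hq.2.2.2]))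
    · rw [m1] at hp
      rw [m5] at hq
      exact Or.inl (sep' (z p) (y p) (x p) (by linarith [hp.2.2.2]) (by linarith [hq.2.2.2]))
    · rw [m2] at hp
      rw [m5] at hq
      exact Or.inr (Or.inr (sep (x p) (y p) (z p) hp.2.2.2 hq.2.2.2))
    · rw [m3] at hp
      rw [m5] at hq
      exact Or.inr (Or.inr (sep (x p) (y p) (z p) hp.2.2.2 hq.2.2.2))
    · rw [m4] at hp
      rw [m5] at hq
      exact Or.inr (Or.inr (by linarith [hp.2.1, hq.2.1]))

lemma arccos_ge : 0 ≤ 4 * arccos (1 / √3) - π := by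
  have hs : 0 < √2 := by positivity
  have h2 : √2 ^ 2 = 2 := Real.sq_sqrt (by norm_num)
  have h3 : √3 ^ 2 = 3 := Real.sq_sqrt (by norm_num)
  have hs3 : 0 < √3 := by positivity
  have e : π / 4 = arccos (√2 / 2) := by
    rw [← Real.cos_pi_div_four, arccos_cos (by positivity) (by linarith [pi_pos])]
  have : arccos (√2 / 2) ≤ arccos (1 / √3) := by
    apply arccos_le_arccos
    rw [div_le_div_iff₀ hs3 (by norm_num)]
    nlinarith [mul_pos hs hs3, show (√2 * √3) ^ 2 = 6 by rw [mul_pow, h2, h3]; norm_num]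
  linarith

/-- The case in which the long edge joins `p₀` and `p₁`. -/
lemma main_case (p₀ p₁ p₂ p₃ : E3) (h01 : dist p₀ p₁ = 2 * √2) (h02 : dist p₀ p₂ = 2)
    (h03 : dist p₀ p₃ = 2) (h23 : dist p₂ p₃ = 2) (h13 : dist p₁ p₃ = 2) (h12 : dist p₁ p₂ = 2) :
    (volume (convexHull ℝ ({p₀, p₁, p₂, p₃} : Set E3) ∩
        (Metric.closedBall p₀ 1 ∪ Metric.closedBall p₁ 1 ∪ Metric.closedBall p₂ 1 ∪
          Metric.closedBall p₃ 1))).toReal =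
      δoct * (volume (convexHull ℝ ({p₀, p₁, p₂, p₃} : Set E3))).toReal := by
  have hs : 0 < √2 := by positivity
  have hs2 : √2 ^ 2 = 2 := Real.sq_sqrt (by norm_num)
  obtain ⟨o, ho⟩ : ∃ o : E3, o = (1 / 2 : ℝ) • (p₀ + p₁) := ⟨_, rfl⟩
  obtain ⟨u, hu⟩ : ∃ u : E3, u = p₀ - o := ⟨_, rfl⟩
  obtain ⟨v, hv⟩ : ∃ v : E3, v = p₂ - o := ⟨_, rfl⟩
  obtain ⟨w, hw⟩ : ∃ w : E3, w = p₃ - o := ⟨_, rfl⟩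
  have e0 : p₀ = o + u := by rw [hu]; abel
  have e1 : p₁ = o - u := by rw [hu, ho]; module
  have e2 : p₂ = o + v := by rw [hv]; abel
  have e3 : p₃ = o + w := by rw [hw]; abel
  clear ho hu hv hw
  subst e0 e1 e2 e3
  have sq : ∀ (s t : E3) (r : ℝ), ‖s - t‖ = r →
      inner ℝ s s - 2 * inner ℝ s t + inner ℝ t t = r ^ 2 := by
    rintro s t r rfl
    rw [norm_sub_sq_real, real_inner_self_eq_norm_sq, real_inner_self_eq_norm_sq]
  rw [dist_eq_norm] at *
  have k01 := sq u (-u) (2 * √2) (by rw [← h01]; congr 1; abel)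
  have k02 := sq u v 2 (by rw [← h02]; congr 1; abel)
  have k03 := sq u w 2 (by rw [← h03]; congr 1; abel)
  have k23 := sq v w 2 (by rw [← h23]; congr 1; abel)
  have k13 := sq (-u) w 2 (by rw [← h13]; congr 1; abel)
  have k12 := sq (-u) v 2 (by rw [← h12]; congr 1; abel)
  simp only [inner_neg_left, inner_neg_right, neg_neg, mul_pow, hs2] at k01 k02 k03 k23 k13 k12
  have huu : inner ℝ u u = (2 : ℝ) := by linarith
  have huv : inner ℝ u v = (0 : ℝ) := by linarith
  have huw : inner ℝ u w = (0 : ℝ) := by linarith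
  have hvv : inner ℝ v v = (2 : ℝ) := by linarith
  have hww : inner ℝ w w = (2 : ℝ) := by linarith
  have hvw : inner ℝ v w = (0 : ℝ) := by linarith
  have hvu : inner ℝ v u = (0 : ℝ) := by rw [real_inner_comm]; exact huv
  have hwu : inner ℝ w u = (0 : ℝ) := by rw [real_inner_comm]; exact huw
  have hi : (√2)⁻¹ * ((√2)⁻¹ * 2) = 1 := by field_simp; linarith
  have hON : ON3 ((√2)⁻¹ • v) ((√2)⁻¹ • w) ((√2)⁻¹ • u) := by
    refine ⟨?_, ?_, ?_, ?_, ?_, ?_⟩ <;>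
      simp only [real_inner_smul_left, real_inner_smul_right, huu, hvv, hww, hvw, hvu, hwu,
        mul_zero, hi]
  have := core hON o
  simp only [smul_smul, mul_inv_cancel₀ hs.ne', one_smul] at this
  rw [this.1, this.2, ENNReal.toReal_mul, ENNReal.toReal_ofReal (by linarith [arccos_ge]),
    ENNReal.toReal_ofReal (by positivity)]
  have h8 : √8 = 2 * √2 := by
    rw [show (8 : ℝ) = 2 ^ 2 * 2 by norm_num, Real.sqrt_mul (by norm_num), Real.sqrt_sq (by norm_num)]
  rw [δoct, h8]
  simp only [ENNReal.toReal_ofNat]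
  field_simp
  ring

/-- A quarter of a regular octahedron of edge `2` (five edges of length `2`, one of
length `2√2`) has compression `Γ(S) = 0`; equivalently its density is `δ_oct`. -/
theorem octahedron_wedge_compression_zero (p₀ p₁ p₂ p₃ : E3)
    (hedges : (dist p₀ p₁ = 2 * Real.sqrt 2 ∧ dist p₀ p₂ = 2 ∧ dist p₀ p₃ = 2 ∧ dist p₂ p₃ = 2 ∧ dist p₁ p₃ = 2 ∧ dist p₁ p₂ = 2) ∨
      (dist p₀ p₁ = 2 ∧ dist p₀ p₂ = 2 * Real.sqrt 2 ∧ dist p₀ p₃ = 2 ∧ dist p₂ p₃ = 2 ∧ dist p₁ p₃ = 2 ∧ dist p₁ p₂ = 2) ∨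
      (dist p₀ p₁ = 2 ∧ dist p₀ p₂ = 2 ∧ dist p₀ p₃ = 2 * Real.sqrt 2 ∧ dist p₂ p₃ = 2 ∧ dist p₁ p₃ = 2 ∧ dist p₁ p₂ = 2) ∨
      (dist p₀ p₁ = 2 ∧ dist p₀ p₂ = 2 ∧ dist p₀ p₃ = 2 ∧ dist p₂ p₃ = 2 * Real.sqrt 2 ∧ dist p₁ p₃ = 2 ∧ dist p₁ p₂ = 2) ∨
      (dist p₀ p₁ = 2 ∧ dist p₀ p₂ = 2 ∧ dist p₀ p₃ = 2 ∧ dist p₂ p₃ = 2 ∧ dist p₁ p₃ = 2 * Real.sqrt 2 ∧ dist p₁ p₂ = 2) ∨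
      (dist p₀ p₁ = 2 ∧ dist p₀ p₂ = 2 ∧ dist p₀ p₃ = 2 ∧ dist p₂ p₃ = 2 ∧ dist p₁ p₃ = 2 ∧ dist p₁ p₂ = 2 * Real.sqrt 2)) :
    Gamma p₀ p₁ p₂ p₃ = 0 ∧
    (volume (convexHull ℝ ({p₀, p₁, p₂, p₃} : Set E3) ∩
        (Metric.closedBall p₀ 1 ∪ Metric.closedBall p₁ 1 ∪ Metric.closedBall p₂ 1 ∪
          Metric.closedBall p₃ 1))).toReal =
      δoct * (volume (convexHull ℝ ({p₀, p₁, p₂, p₃} : Set E3))).toReal := by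
  suffices key : (volume (convexHull ℝ ({p₀, p₁, p₂, p₃} : Set E3) ∩
        (Metric.closedBall p₀ 1 ∪ Metric.closedBall p₁ 1 ∪ Metric.closedBall p₂ 1 ∪
          Metric.closedBall p₃ 1))).toReal =
      δoct * (volume (convexHull ℝ ({p₀, p₁, p₂, p₃} : Set E3))).toReal by
    refine ⟨?_, key⟩
    rw [_root_.Gamma, key]; ring
  rcases hedges with ⟨h01, h02, h03, h23, h13, h12⟩ | ⟨h01, h02, h03, h23, h13, h12⟩ |
    ⟨h01, h02, h03, h23, h13, h12⟩ | ⟨h01, h02, h03, h23, h13, h12⟩ |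
    ⟨h01, h02, h03, h23, h13, h12⟩ | ⟨h01, h02, h03, h23, h13, h12⟩
  · exact main_case p₀ p₁ p₂ p₃ h01 h02 h03 h23 h13 h12
  · have := main_case p₀ p₂ p₁ p₃ h02 h01 h03 h13 h23 (by rwa [dist_comm])
    convert this using 4
    · congr 1; ext p; simp; tauto
    · ext p; simp; tauto
    · congr 1; ext p; simp; tauto
  · have := main_case p₀ p₃ p₁ p₂ h03 h01 h02 h12 (by rwa [dist_comm]) (by rwa [dist_comm])
    convert this using 4
    · congr 1; ext p; simp; tauto
    · ext p; simp; tauto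
    · congr 1; ext p; simp; tauto
  · have := main_case p₂ p₃ p₀ p₁ h23 (by rwa [dist_comm]) (by rwa [dist_comm]) h01
      (by rwa [dist_comm]) (by rwa [dist_comm])
    convert this using 4
    · congr 1; ext p; simp; tauto
    · ext p; simp; tauto
    · congr 1; ext p; simp; tauto
  · have := main_case p₁ p₃ p₀ p₂ h13 (by rwa [dist_comm]) h12 h02
      (by rwa [dist_comm]) (by rwa [dist_comm])
    convert this using 4
    · congr 1; ext p; simp; tauto
    · ext p; simp; tauto
    · congr 1; ext p; simp; tauto
  · have := main_case p₁ p₂ p₀ p₃ h12 (by rwa [dist_comm]) h13 h03 h23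
      (by rwa [dist_comm])
    convert this using 4
    · congr 1; ext p; simp; tauto
    · ext p; simp; tauto
    · congr 1; ext p; simp; tauto
end
end

section
/- Let p₀,p₁,p₂,p₃ ∈ ℝ³ be the vertices of a regular tetrahedron T with edge length 2. Then vol(T) = 2√2/3, vol(T ∩ (B(p₀,1) ∪ B(p₁,1) ∪ B(p₂,1) ∪ B(p₃,1))) = (4/3)·(3·arccos(1/3) − π), and consequently Γ(T) = (4/3)·(3·arccos(1/3) − π) − δ_oct·(2√2/3), a number lying strictly between 0.0553 and 0.0554 (this quantity is called one point, 1 pt ≈ 0.0553736). -/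
open MeasureTheory Real

noncomputable section

lemma dbl_lo {x y c d : ℝ} (h : c ≤ cos x) (hc : 0 ≤ c) (hy : y = 2 * x)
    (hd : d ≤ 2 * c ^ 2 - 1) : d ≤ cos y := by
  rw [hy, cos_two_mul]
  nlinarith

lemma dbl_hi {x y c d : ℝ} (h : cos x ≤ c) (hx : 0 ≤ x) (hx' : x ≤ 1) (hy : y = 2 * x)
    (hd : 2 * c ^ 2 - 1 ≤ d) : cos y ≤ d := by
  have : 0 ≤ cos x := cos_nonneg_of_neg_pi_div_two_le_of_le (by linarith [pi_gt_three])
    (by linarith [pi_gt_three])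
  rw [hy, cos_two_mul]
  nlinarith

lemma cos_lo : 1/3 < cos (24619/20000) := by
  have h := abs_le.1 (Real.cos_bound (x := 24619/10240000) (by rw [abs_of_pos (by norm_num)]; norm_num))
  rw [abs_of_pos (by norm_num : (0:ℝ) < 24619/10240000)] at h
  have h0 : 9999971099113181/10000000000000000 ≤ cos (24619/10240000) := by norm_num at h ⊢; linarith [h.1]
  have h1 := dbl_lo (y := 24619/5120000) (d := 4882756053037/4882812500000) h0 (by norm_num) (by norm_num) (by norm_num)
  have h2 := dbl_lo (y := 24619/2560000) (d := 2499884397287983/2500000000000000) h1 (by norm_num) (by norm_num) (by norm_num)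
  have h3 := dbl_lo (y := 24619/1280000) (d := 4999075199686243/5000000000000000) h2 (by norm_num) (by norm_num) (by norm_num)
  have h4 := dbl_lo (y := 24619/640000) (d := 249815057042361/250000000000000) h3 (by norm_num) (by norm_num) (by norm_num)
  have h5 := dbl_lo (y := 24619/320000) (d := 1994084014404997/2000000000000000) h4 (by norm_num) (by norm_num) (by norm_num)
  have h6 := dbl_lo (y := 24619/160000) (d := 9881855282527741/10000000000000000) h5 (by norm_num) (by norm_num) (by norm_num)
  have h7 := dbl_lo (y := 24619/80000) (d := 9530212764964283/10000000000000000) h6 (by norm_num) (by norm_num) (by norm_num)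
  have h8 := dbl_lo (y := 24619/40000) (d := 255155970909301/312500000000000) h7 (by norm_num) (by norm_num) (by norm_num)
  have h9 := dbl_lo (y := 24619/20000) (d := 1666707915844409/5000000000000000) h8 (by norm_num) (by norm_num) (by norm_num)
  norm_num at *
  linarith [h9]

lemma cos_hi : cos (1230963/1000000) < 1/3 := by
  have h := abs_le.1 (Real.cos_bound (x := 1230963/512000000) (by rw [abs_of_pos (by norm_num)]; norm_num))
  rw [abs_of_pos (by norm_num : (0:ℝ) < 1230963/512000000)] at h
  have h0 : cos (1230963/512000000) ≤ 9999971098537541/10000000000000000 := by norm_num at h ⊢; linarith [h.2]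
  have h1 := dbl_hi (y := 1230963/256000000) (d := 9999884394317223/10000000000000000) h0 (by norm_num) (by norm_num) (by norm_num) (by norm_num)
  have h2 := dbl_hi (y := 1230963/128000000) (d := 9999537579941827/10000000000000000) h1 (by norm_num) (by norm_num) (by norm_num) (by norm_num)
  have h3 := dbl_hi (y := 1230963/64000000) (d := 9998150362533771/10000000000000000) h2 (by norm_num) (by norm_num) (by norm_num) (by norm_num)
  have h4 := dbl_hi (y := 1230963/32000000) (d := 2498150533591709/2500000000000000) h3 (by norm_num) (by norm_num) (by norm_num) (by norm_num)
  have h5 := dbl_hi (y := 1230963/16000000) (d := 997041948315053/1000000000000000) h4 (by norm_num) (by norm_num) (by norm_num) (by norm_num)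
  have h6 := dbl_hi (y := 1230963/8000000) (d := 9881852933997537/10000000000000000) h5 (by norm_num) (by norm_num) (by norm_num) (by norm_num)
  have h7 := dbl_hi (y := 1230963/4000000) (d := 9530203481831147/10000000000000000) h6 (by norm_num) (by norm_num) (by norm_num) (by norm_num)
  have h8 := dbl_hi (y := 1230963/2000000) (d := 1020619460127663/1250000000000000) h7 (by norm_num) (by norm_num) (by norm_num) (by norm_num)
  have h9 := dbl_hi (y := 1230963/1000000) (d := 1666650127304207/5000000000000000) h8 (by norm_num) (by norm_num) (by norm_num) (by norm_num)
  norm_num at *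
  linarith [h9]

lemma arccos_third_gt : 1.23095 < arccos (1 / 3) := by
  have h : arccos (cos 1.23095) = 1.23095 :=
    arccos_cos (by norm_num) (by linarith [pi_gt_three])
  rw [← h]
  apply arccos_lt_arccos (by norm_num) _ (cos_le_one _)
  have := cos_lo
  norm_num at this ⊢
  linarith

lemma arccos_third_lt : arccos (1 / 3) < 1.230963 := by
  have h : arccos (cos 1.230963) = 1.230963 :=
    arccos_cos (by norm_num) (by linarith [pi_gt_three])
  rw [← h]
  apply arccos_lt_arccos (neg_one_le_cos _) _ (by norm_num)
  have := cos_hi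
  norm_num at this ⊢
  linarith

lemma two_arccos : 2 * arccos (1 / √3) = π - arccos (1 / 3) := by
  have h0 : (0:ℝ) ≤ 1 / √3 := by positivity
  have h1 : 1 / √3 ≤ 1 := by
    rw [div_le_one (by positivity)]
    exact Real.one_le_sqrt.2 (by norm_num)
  have hc : cos (2 * arccos (1 / √3)) = - (1/3) := by
    rw [cos_two_mul, cos_arccos (by linarith) h1, div_pow, Real.sq_sqrt (by norm_num)]
    norm_num
  rw [← arccos_neg, ← hc, arccos_cos]
  · linarith [arccos_nonneg (1 / √3)]
  · linarith [arccos_le_pi_div_two.2 h0]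

lemma two_arccos' : 2 * arccos (√(2 / 3)) = arccos (1 / 3) := by
  have h0 : (0:ℝ) ≤ √(2 / 3) := by positivity
  have h1 : √(2 / 3) ≤ 1 := Real.sqrt_le_one.2 (by norm_num)
  have hc : cos (2 * arccos (√(2 / 3))) = 1/3 := by
    rw [cos_two_mul, cos_arccos (by linarith) h1, Real.sq_sqrt (by norm_num)]
    norm_num
  rw [← hc, arccos_cos]
  · linarith [arccos_nonneg (√(2 / 3))]
  · linarith [arccos_le_pi_div_two.2 h0]

lemma radial_integral : ∫⁻ r in Set.Ioc (0:ℝ) 1, ENNReal.ofReal (r * (2 * √(1 - r ^ 2)))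
    = ENNReal.ofReal (2 / 3) := by
  have hd : ∀ x ∈ Set.uIcc (0:ℝ) 1, HasDerivAt (fun r : ℝ => -(2/3) * (1 - r ^ 2) ^ (3/2 : ℝ))
      (x * (2 * √(1 - x ^ 2))) x := by
    intro x _
    have h1 : HasDerivAt (fun r : ℝ => 1 - r ^ 2) (-(2 * x)) x := by
      simpa using (hasDerivAt_pow 2 x).const_sub 1
    have h2 := (h1.rpow_const (p := 3/2) (Or.inr (by norm_num))).const_mul (-(2/3))
    refine h2.congr_deriv ?_
    rw [show (3/2 - 1 : ℝ) = 1/2 by norm_num, ← Real.sqrt_eq_rpow]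
    ring
  have hc : Continuous (fun x : ℝ => x * (2 * √(1 - x ^ 2))) := by fun_prop
  have h := intervalIntegral.integral_eq_sub_of_hasDerivAt hd (hc.intervalIntegrable 0 1)
  rw [intervalIntegral.integral_of_le zero_le_one] at h
  rw [← ofReal_integral_eq_lintegral_ofReal, h]
  · norm_num
  · exact (hc.integrableOn_Icc (a := 0) (b := 1)).mono_set Set.Ioc_subset_Icc_self
  · refine (ae_restrict_iff' measurableSet_Ioc).2 (Filter.Eventually.of_forall fun x hx => ?_)
    have := hx.1
    simp only [Pi.zero_apply]
    positivity

lemma sector_iff {θ : ℝ} (h : θ ∈ Set.Ioo (-π) π) :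
    √2 * |sin θ| ≤ cos θ ↔ θ ∈ Set.Icc (-arccos (√(2 / 3))) (arccos (√(2 / 3))) := by
  have hs1 : √(2 / 3) ≤ 1 := Real.sqrt_le_one.2 (by norm_num)
  have hs0 : (0:ℝ) ≤ √(2 / 3) := by positivity
  have hs2 : √(2 / 3) ^ 2 = 2 / 3 := Real.sq_sqrt (by norm_num)
  have h2 : √2 ^ 2 = 2 := Real.sq_sqrt (by norm_num)
  have key : √2 * |sin θ| ≤ cos θ ↔ √(2 / 3) ≤ cos θ := by
    have e : (√2 * |sin θ|) ^ 2 = 2 * (1 - cos θ ^ 2) := by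
      rw [mul_pow, sq_abs, h2, sin_sq]
    have hn : 0 ≤ √2 * |sin θ| := by positivity
    constructor
    · intro hh
      apply (fun h1 h2 => abs_le_of_sq_le_sq' h1 h2 |>.2) _ (hn.trans hh)
      nlinarith
    · intro hh
      apply (fun h1 h2 => abs_le_of_sq_le_sq' h1 h2 |>.2) _ (hs0.trans hh)
      nlinarith
  rw [key, Set.mem_Icc, ← abs_le, ← cos_abs θ]
  have ha : |θ| ∈ Set.Icc 0 π := ⟨abs_nonneg _, (abs_lt.2 h).le⟩
  have hb : arccos (√(2 / 3)) ∈ Set.Icc 0 π := ⟨arccos_nonneg _, arccos_le_pi _⟩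
  rw [← strictAntiOn_cos.le_iff_ge hb ha, cos_arccos (by linarith) hs1]

/-- coordinates: `(z, (x, y))`. -/
def wedge3 : Set (ℝ × (ℝ × ℝ)) :=
  {q | √2 * |q.2.2| ≤ q.2.1 ∧ q.1 ^ 2 + q.2.1 ^ 2 + q.2.2 ^ 2 ≤ 1}

lemma measurableSet_wedge3 : MeasurableSet wedge3 := by
  have h1 : IsClosed {q : ℝ × (ℝ × ℝ) | √2 * |q.2.2| ≤ q.2.1} :=
    isClosed_le (by fun_prop) (by fun_prop)
  have h2 : IsClosed {q : ℝ × (ℝ × ℝ) | q.1 ^ 2 + q.2.1 ^ 2 + q.2.2 ^ 2 ≤ 1} :=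
    isClosed_le (by fun_prop) (by fun_prop)
  exact (h1.inter h2).measurableSet

lemma volume_wedge3 : volume wedge3 = ENNReal.ofReal (2 / 3 * arccos (1 / 3)) := by
  rw [Measure.volume_eq_prod, Measure.prod_apply_symm measurableSet_wedge3,
    ← lintegral_comp_polarCoord_symm]
  set A := arccos (√(2 / 3)) with hA
  have hA0 : 0 ≤ A := arccos_nonneg _
  have hAlt : A < π := arccos_lt_pi.2 (by have := Real.sqrt_nonneg (2/3); linarith)
  have hpt : polarCoord.target = Set.Ioi (0:ℝ) ×ˢ Set.Ioo (-π) π := rfl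
  have hm : MeasurableSet polarCoord.target := polarCoord.open_target.measurableSet
  have step : ∀ p ∈ polarCoord.target,
      ENNReal.ofReal p.1 • volume ((fun x : ℝ => (x, polarCoord.symm p)) ⁻¹' wedge3)
      = (Set.Ioc (0:ℝ) 1).indicator (fun r => ENNReal.ofReal (r * (2 * √(1 - r ^ 2)))) p.1 *
        (Set.Icc (-A) A).indicator (fun _ => 1) p.2 := by
    rintro ⟨r, θ⟩ hp
    rw [hpt] at hp
    obtain ⟨hr, hθ⟩ := hp
    simp only [Set.mem_Ioi] at hr
    simp only at hθ
    have hset : ((fun x : ℝ => (x, polarCoord.symm (r, θ))) ⁻¹' wedge3)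
        = {z : ℝ | θ ∈ Set.Icc (-A) A ∧ z ^ 2 ≤ 1 - r ^ 2} := by
      ext z
      simp only [wedge3, polarCoord_symm_apply, Set.mem_preimage, Set.mem_ofPred_eq]
      rw [← sector_iff hθ, abs_mul, abs_of_pos hr,
        show √2 * (r * |sin θ|) = r * (√2 * |sin θ|) by ring, mul_le_mul_iff_right₀ hr]
      have : z ^ 2 + (r * cos θ) ^ 2 + (r * sin θ) ^ 2 = z ^ 2 + r ^ 2 := by
        linear_combination r ^ 2 * sin_sq_add_cos_sq θ
      rw [this]
      constructor <;> rintro ⟨h1, h2⟩ <;> exact ⟨h1, by linarith⟩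
    rw [hset]
    by_cases h1 : θ ∈ Set.Icc (-A) A
    · simp only [h1, true_and, Set.indicator_of_mem, mul_one]
      by_cases h2 : r ≤ 1
      · have : {z : ℝ | z ^ 2 ≤ 1 - r ^ 2} = Set.Icc (-√(1 - r ^ 2)) (√(1 - r ^ 2)) := by
          ext z
          simp only [Set.mem_ofPred_eq, Set.mem_Icc]
          exact Real.sq_le (by nlinarith)
        rw [this, Real.volume_Icc, Set.indicator_of_mem (Set.mem_Ioc.2 ⟨hr, h2⟩),
          smul_eq_mul, ← ENNReal.ofReal_mul hr.le]
        congr 2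
        ring
      · have : {z : ℝ | z ^ 2 ≤ 1 - r ^ 2} = ∅ := by
          ext z
          simp only [Set.mem_ofPred_eq, Set.mem_empty_iff_false, iff_false]
          nlinarith [sq_nonneg z]
        rw [this, Set.indicator_of_notMem (fun h => h2 h.2)]
        simp
    · simp [h1]
  rw [setLIntegral_congr_fun hm step, hpt, Measure.volume_eq_prod, ← Measure.prod_restrict,
    lintegral_prod_mul]
  · rw [lintegral_indicator measurableSet_Ioc, lintegral_indicator measurableSet_Icc,
      Measure.restrict_restrict measurableSet_Ioc, Measure.restrict_restrict measurableSet_Icc,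
      Set.inter_eq_left.2 (Set.Ioc_subset_Ioi_self), Set.inter_eq_left.2, radial_integral]
    · simp only [lintegral_const, one_mul, Measure.restrict_apply_univ, Real.volume_Icc]
      rw [← ENNReal.ofReal_mul (by norm_num), ← two_arccos', ← hA]
      congr 1
      ring
    · intro x hx
      exact ⟨by linarith [hx.1], by linarith [hx.2]⟩
  · refine (Measurable.indicator ?_ measurableSet_Ioc).aemeasurable
    fun_prop
  · exact (measurable_const.indicator measurableSet_Icc).aemeasurable

lemma mp_coords : MeasurePreserving (fun v : E3 => ((v 0, (v 1, v 2)) : ℝ × (ℝ × ℝ))) := by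
  have h1 : MeasurePreserving (fun v : E3 => (WithLp.ofLp v : Fin 3 → ℝ)) :=
    PiLp.volume_preserving_ofLp (Fin 3)
  have h2 := volume_preserving_piFinSuccAbove (fun _ : Fin 3 => ℝ) 0
  have h3 := volume_preserving_finTwoArrow ℝ
  have h4 := ((MeasurePreserving.id (volume : Measure ℝ)).prod h3).comp (h2.comp h1)
  exact h4

structure Fr (e f g : E3) : Prop where
  ee : inner ℝ e e = 1
  ff : inner ℝ f f = 1
  gg : inner ℝ g g = 1
  ef : inner ℝ e f = 0
  eg : inner ℝ e g = 0
  fg : inner ℝ f g = 0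

lemma Fr.rot {e f g : E3} (h : Fr e f g) : Fr f g e :=
  ⟨h.ff, h.gg, h.ee, h.fg, by rw [real_inner_comm]; exact h.ef, by rw [real_inner_comm]; exact h.eg⟩

lemma Fr.basis {e f g : E3} (h : Fr e f g) :
    ∃ b : OrthonormalBasis (Fin 3) ℝ E3, b 0 = e ∧ b 1 = f ∧ b 2 = g := by
  have ho : Orthonormal ℝ ((Set.univ : Set (Fin 3)).domRestrict ![e, f, g]) := by
    rw [orthonormal_iff_ite]
    rintro ⟨i, hi⟩ ⟨j, hj⟩
    have hfe := h.ef
    have hge := h.eg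
    have hgf := h.fg
    rw [real_inner_comm] at hfe hge hgf
    fin_cases i <;> fin_cases j <;>
      simp [h.ef, h.eg, h.fg, hfe, hge, hgf, h.ee, h.ff, h.gg, Set.domRestrict,
        -inner_self_eq_norm_sq_to_K]
  obtain ⟨b, hb⟩ := ho.exists_orthonormalBasis_extension_of_card_eq (by simp)
  exact ⟨b, hb 0 trivial, hb 1 trivial, hb 2 trivial⟩

lemma Fr.mp {e f g : E3} (h : Fr e f g) :
    MeasurePreserving (fun v : E3 => ((inner ℝ e v, (inner ℝ f v, inner ℝ g v)) : ℝ × (ℝ × ℝ))) := by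
  obtain ⟨b, rfl, rfl, rfl⟩ := h.basis
  have := mp_coords.comp b.measurePreserving_repr
  have e : (fun v : E3 => ((inner ℝ (b 0) v, (inner ℝ (b 1) v, inner ℝ (b 2) v)) : ℝ × (ℝ × ℝ)))
      = (fun v : E3 => ((v 0, (v 1, v 2)) : ℝ × (ℝ × ℝ))) ∘ b.repr := by
    funext v
    simp [OrthonormalBasis.repr_apply_apply]
  rw [e]
  exact this

lemma Fr.norm_sq {e f g : E3} (h : Fr e f g) (v : E3) :
    inner ℝ e v ^ 2 + inner ℝ f v ^ 2 + inner ℝ g v ^ 2 = ‖v‖ ^ 2 := by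
  obtain ⟨b, rfl, rfl, rfl⟩ := h.basis
  have := b.sum_sq_norm_inner_right v
  rw [Fin.sum_univ_three] at this
  simpa using this

lemma Fr.expand {e f g : E3} (h : Fr e f g) (v : E3) :
    (inner ℝ e v : ℝ) • e + (inner ℝ f v : ℝ) • f + (inner ℝ g v : ℝ) • g = v := by
  obtain ⟨b, rfl, rfl, rfl⟩ := h.basis
  have := b.sum_repr' v
  rwa [Fin.sum_univ_three] at this

lemma Fr.wedge_aux {e f g : E3} (h : Fr e f g) :
    volume {v : E3 | √2 * |inner ℝ g v| ≤ inner ℝ f v ∧ ‖v‖ ≤ 1}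
      = ENNReal.ofReal (2 / 3 * arccos (1 / 3)) := by
  rw [← volume_wedge3, ← h.mp.measure_preimage measurableSet_wedge3.nullMeasurableSet]
  congr 1
  ext v
  simp only [wedge3, Set.mem_preimage, Set.mem_ofPred_eq]
  rw [h.norm_sq, sq_le_one_iff₀ (norm_nonneg v)]

/-- the linear forms defining the cone -/
def lin (e f g v : E3) : ℝ := - inner ℝ e v + inner ℝ f v + inner ℝ g v

lemma Fr.wedge {e f g : E3} (h : Fr e f g) :
    volume ({v : E3 | 0 ≤ lin e f g v ∧ 0 ≤ lin f g e v} ∩ Metric.closedBall 0 1)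
      = ENNReal.ofReal (2 / 3 * arccos (1 / 3)) := by
  have h2 : √2 * √2 = 2 := Real.mul_self_sqrt (by norm_num)
  have hp : 0 < √2 := by positivity
  have hfr : Fr ((√2)⁻¹ • (e + f)) g ((√2)⁻¹ • (f - e)) := by
    have hfe := h.ef
    have hge := h.eg
    have hgf := h.fg
    rw [real_inner_comm] at hfe hge hgf
    have h2' : (√2)⁻¹ * (√2)⁻¹ = 1 / 2 := by rw [← mul_inv, h2]; norm_num
    constructor <;> simp only [inner_smul_left, inner_smul_right, inner_add_left, inner_add_right,
      inner_sub_left, inner_sub_right, h.ef, h.eg, h.fg, hfe, hge, hgf, h.ee, h.ff, h.gg,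
      RCLike.conj_to_real] <;> norm_num <;> linarith
  rw [← hfr.wedge_aux]
  congr 1
  ext v
  simp only [lin, Set.mem_inter_iff, Set.mem_ofPred_eq, mem_closedBall_zero_iff, inner_smul_left,
    inner_sub_left, RCLike.conj_to_real]
  have : √2 * |(√2)⁻¹ * (inner ℝ f v - inner ℝ e v)| = |inner ℝ f v - inner ℝ e v| := by
    rw [abs_mul, abs_of_pos (inv_pos.2 hp), ← mul_assoc, mul_inv_cancel₀ hp.ne', one_mul]
  rw [this, abs_le]
  constructor
  · rintro ⟨⟨h1, h2⟩, h3⟩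
    exact ⟨⟨by linarith, by linarith⟩, h3⟩
  · rintro ⟨⟨h1, h2⟩, h3⟩
    exact ⟨⟨by linarith, by linarith⟩, h3⟩

/-- Girard's argument, abstractly. -/
lemma girard {X : Type*} [MeasurableSpace X] (μ : Measure X) [IsFiniteMeasure μ] (σ : X → X)
    (hσ : MeasurePreserving σ μ μ) (L M N : X → ℝ) (hL : Measurable L) (hM : Measurable M)
    (hN : Measurable N) (sL : ∀ x, L (σ x) = - L x) (sM : ∀ x, M (σ x) = - M x)
    (sN : ∀ x, N (σ x) = - N x) (zL : μ {x | L x = 0} = 0) (zM : μ {x | M x = 0} = 0)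
    (zN : μ {x | N x = 0} = 0) :
    2 * μ.real {x | 0 ≤ L x ∧ 0 ≤ M x ∧ 0 ≤ N x} + μ.real Set.univ / 2 =
      μ.real {x | 0 ≤ L x ∧ 0 ≤ M x} + μ.real {x | 0 ≤ M x ∧ 0 ≤ N x} +
        μ.real {x | 0 ≤ N x ∧ 0 ≤ L x} := by
  have mL : MeasurableSet {x | 0 ≤ L x} := measurableSet_le measurable_const hL
  have mM : MeasurableSet {x | 0 ≤ M x} := measurableSet_le measurable_const hM
  have mN : MeasurableSet {x | 0 ≤ N x} := measurableSet_le measurable_const hN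
  have nL : ∀ᵐ x ∂μ, L x ≠ 0 := by rw [ae_iff]; simpa using zL
  have nM : ∀ᵐ x ∂μ, M x ≠ 0 := by rw [ae_iff]; simpa using zM
  have nN : ∀ᵐ x ∂μ, N x ≠ 0 := by rw [ae_iff]; simpa using zN
  have split : ∀ (P : X → Prop) (F : X → ℝ), MeasurableSet {x | 0 ≤ F x} →
      μ.real {x | P x} = μ.real {x | P x ∧ 0 ≤ F x} + μ.real {x | P x ∧ F x < 0} := by
    intro P F hF
    rw [← measureReal_inter_add_sdiff (s := {x | P x}) hF]
    congr 2
    ext x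
    simp
  have a1 := split (fun _ => True) N mN
  have a2 := split (fun x => 0 ≤ N x) L mL
  have a3 := split (fun x => 0 ≤ N x ∧ 0 ≤ L x) M mM
  have a4 := split (fun x => 0 ≤ N x ∧ L x < 0) M mM
  have a5 := split (fun x => 0 ≤ M x ∧ 0 ≤ N x) L mL
  have a6 := split (fun x => 0 ≤ L x ∧ 0 ≤ M x) N mN
  have b1 : μ.real {x | True ∧ N x < 0} = μ.real {x | 0 ≤ N x} := by
    rw [← hσ.measureReal_preimage mN.nullMeasurableSet]
    apply measureReal_congr
    filter_upwards [nN] with x hx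
    apply propext
    change (True ∧ N x < 0) ↔ 0 ≤ N (σ x)
    rw [sN]
    constructor
    · rintro ⟨-, h⟩; linarith
    · intro h; exact ⟨trivial, lt_of_le_of_ne (by linarith) hx⟩
  have b2 : μ.real {x | (0 ≤ N x ∧ L x < 0) ∧ M x < 0}
      = μ.real {x | (0 ≤ L x ∧ 0 ≤ M x) ∧ N x < 0} := by
    have hm : MeasurableSet {x | (0 ≤ L x ∧ 0 ≤ M x) ∧ N x < 0} :=
      (mL.inter mM).inter (measurableSet_lt hN measurable_const)
    rw [← hσ.measureReal_preimage hm.nullMeasurableSet]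
    apply measureReal_congr
    filter_upwards [nN, nL, nM] with x hx hy hz
    apply propext
    change ((0 ≤ N x ∧ L x < 0) ∧ M x < 0) ↔ (0 ≤ L (σ x) ∧ 0 ≤ M (σ x)) ∧ N (σ x) < 0
    rw [sN, sM, sL]
    constructor
    · rintro ⟨⟨h1, h2⟩, h3⟩
      exact ⟨⟨by linarith, by linarith⟩, by have := lt_of_le_of_ne h1 hx.symm; linarith⟩
    · rintro ⟨⟨h1, h2⟩, h3⟩
      exact ⟨⟨by linarith, lt_of_le_of_ne (by linarith) hy⟩, lt_of_le_of_ne (by linarith) hz⟩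
  have c1 : {x : X | True} = Set.univ := rfl
  have c2 : {x | True ∧ 0 ≤ N x} = {x | 0 ≤ N x} := by simp
  have c3 : {x | (0 ≤ N x ∧ 0 ≤ L x) ∧ 0 ≤ M x} = {x | 0 ≤ L x ∧ 0 ≤ M x ∧ 0 ≤ N x} := by
    ext x; simp only [Set.mem_ofPred_eq]; tauto
  have c4 : {x | (0 ≤ N x ∧ L x < 0) ∧ 0 ≤ M x} = {x | (0 ≤ M x ∧ 0 ≤ N x) ∧ L x < 0} := by
    ext x; simp only [Set.mem_ofPred_eq]; tauto
  have c5 : {x | (0 ≤ M x ∧ 0 ≤ N x) ∧ 0 ≤ L x} = {x | 0 ≤ L x ∧ 0 ≤ M x ∧ 0 ≤ N x} := by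
    ext x; simp only [Set.mem_ofPred_eq]; tauto
  have c6 : {x | (0 ≤ L x ∧ 0 ≤ M x) ∧ 0 ≤ N x} = {x | 0 ≤ L x ∧ 0 ≤ M x ∧ 0 ≤ N x} := by
    ext x; simp only [Set.mem_ofPred_eq]; tauto
  rw [c1, c2, b1] at a1
  rw [c3] at a3
  rw [c4, b2] at a4
  rw [c5] at a5
  rw [c6] at a6
  linarith

lemma measurable_lin (e f g : E3) : Continuous (lin e f g) := by
  unfold lin; fun_prop

lemma Fr.lin_null {e f g : E3} (h : Fr e f g) : volume {v | lin e f g v = 0} = 0 := by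
  have := Measure.addHaar_submodule (volume : Measure E3)
    (LinearMap.ker (innerₛₗ ℝ (-e + f + g))) (by
      intro ht
      have he : e ∈ LinearMap.ker (innerₛₗ ℝ (-e + f + g)) := by rw [ht]; trivial
      have hfe := h.ef
      have hge := h.eg
      rw [real_inner_comm] at hfe hge
      rw [LinearMap.mem_ker] at he
      simp only [innerₛₗ_apply_apply, inner_add_left, inner_neg_left, h.ee, hfe, hge] at he
      norm_num at he)
  convert this using 2
  ext v
  simp [lin, inner_add_left]

lemma Fr.cone {e f g : E3} (h : Fr e f g) :
    volume.real ({v : E3 | 0 ≤ lin e f g v ∧ 0 ≤ lin f g e v ∧ 0 ≤ lin g e f v} ∩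
      Metric.closedBall 0 1) = arccos (1 / 3) - π / 3 := by
  have hB : MeasurableSet (Metric.closedBall (0:E3) 1) := Metric.isClosed_closedBall.measurableSet
  have hfin : IsFiniteMeasure (volume.restrict (Metric.closedBall (0:E3) 1)) :=
    ⟨by rw [Measure.restrict_apply_univ]; exact measure_closedBall_lt_top⟩
  have hσ : MeasurePreserving (fun x : E3 => -x) (volume.restrict (Metric.closedBall (0:E3) 1))
      (volume.restrict (Metric.closedBall (0:E3) 1)) := by
    have := (Measure.measurePreserving_neg (volume : Measure E3)).restrict_preimage hB
    convert this using 2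
    ext x
    simp
  have key := girard (volume.restrict (Metric.closedBall (0:E3) 1)) (fun x => -x) hσ
    (lin e f g) (lin f g e) (lin g e f) (measurable_lin _ _ _).measurable
    (measurable_lin _ _ _).measurable (measurable_lin _ _ _).measurable
    (by intro x; simp only [lin, inner_neg_right]; ring)
    (by intro x; simp only [lin, inner_neg_right]; ring)
    (by intro x; simp only [lin, inner_neg_right]; ring)
    (Measure.absolutelyContinuous_of_le Measure.restrict_le_self h.lin_null)
    (Measure.absolutelyContinuous_of_le Measure.restrict_le_self h.rot.lin_null)
    (Measure.absolutelyContinuous_of_le Measure.restrict_le_self h.rot.rot.lin_null)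
  have hr : ∀ s : Set E3, (volume.restrict (Metric.closedBall (0:E3) 1)).real s
      = volume.real (s ∩ Metric.closedBall (0:E3) 1) := by
    intro s
    rw [measureReal_restrict_apply' hB]
  have hw : 0 ≤ 2 / 3 * arccos (1 / 3) := by have := arccos_nonneg (1/3); positivity
  rw [hr, hr, hr, hr, hr, measureReal_def volume (_ ∩ _), measureReal_def volume (Set.univ ∩ _),
    Set.univ_inter, EuclideanSpace.volume_closedBall_fin_three] at key
  simp only [measureReal_def] at key ⊢
  rw [h.wedge, h.rot.wedge, h.rot.rot.wedge, ENNReal.toReal_ofReal hw] at key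
  have : (ENNReal.ofReal 1 ^ 3 * ENNReal.ofReal (π * 4 / 3)).toReal = π * 4 / 3 := by
    simp only [ENNReal.ofReal_one, one_pow, one_mul]
    exact ENNReal.toReal_ofReal (by positivity)
  rw [this] at key
  linarith

lemma mp_coords_pi : MeasurePreserving (fun v : Fin 3 → ℝ => ((v 0, (v 1, v 2)) : ℝ × (ℝ × ℝ))) := by
  have h2 := volume_preserving_piFinSuccAbove (fun _ : Fin 3 => ℝ) 0
  have h3 := volume_preserving_finTwoArrow ℝ
  exact ((MeasurePreserving.id (volume : Measure ℝ)).prod h3).comp h2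

lemma lint_Icc {t : ℝ} (ht : 0 ≤ t) (F : ℝ → ℝ) (hF : Continuous F) (h0 : ∀ x ∈ Set.Icc 0 t, 0 ≤ F x) :
    ∫⁻ x in Set.Icc 0 t, ENNReal.ofReal (F x) = ENNReal.ofReal (∫ x in (0:ℝ)..t, F x) := by
  rw [intervalIntegral.integral_of_le ht, ← integral_Icc_eq_integral_Ioc,
    ofReal_integral_eq_lintegral_ofReal]
  · exact hF.integrableOn_Icc
  · exact (ae_restrict_iff' measurableSet_Icc).2 (Filter.Eventually.of_forall h0)

def tri (t : ℝ) : Set (ℝ × ℝ) := {q | 0 ≤ q.1 ∧ 0 ≤ q.2 ∧ q.1 + q.2 ≤ t}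

def simp3 (t : ℝ) : Set (ℝ × (ℝ × ℝ)) :=
  {q | 0 ≤ q.1 ∧ 0 ≤ q.2.1 ∧ 0 ≤ q.2.2 ∧ q.1 + q.2.1 + q.2.2 ≤ t}

lemma measurableSet_tri (t : ℝ) : MeasurableSet (tri t) := by
  have h1 : IsClosed {q : ℝ × ℝ | 0 ≤ q.1} := isClosed_le (by fun_prop) (by fun_prop)
  have h2 : IsClosed {q : ℝ × ℝ | 0 ≤ q.2} := isClosed_le (by fun_prop) (by fun_prop)
  have h3 : IsClosed {q : ℝ × ℝ | q.1 + q.2 ≤ t} := isClosed_le (by fun_prop) (by fun_prop)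
  exact (h1.inter (h2.inter h3)).measurableSet

lemma measurableSet_simp3 (t : ℝ) : MeasurableSet (simp3 t) := by
  have h0 : IsClosed {q : ℝ × (ℝ × ℝ) | 0 ≤ q.1} := isClosed_le (by fun_prop) (by fun_prop)
  have h1 : IsClosed {q : ℝ × (ℝ × ℝ) | 0 ≤ q.2.1} := isClosed_le (by fun_prop) (by fun_prop)
  have h2 : IsClosed {q : ℝ × (ℝ × ℝ) | 0 ≤ q.2.2} := isClosed_le (by fun_prop) (by fun_prop)
  have h3 : IsClosed {q : ℝ × (ℝ × ℝ) | q.1 + q.2.1 + q.2.2 ≤ t} :=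
    isClosed_le (by fun_prop) (by fun_prop)
  exact (h0.inter (h1.inter (h2.inter h3))).measurableSet

lemma volume_tri {t : ℝ} (ht : 0 ≤ t) : volume (tri t) = ENNReal.ofReal (t ^ 2 / 2) := by
  rw [Measure.volume_eq_prod, Measure.prod_apply (measurableSet_tri t)]
  have : ∀ b : ℝ, volume (Prod.mk b ⁻¹' tri t)
      = (Set.Icc 0 t).indicator (fun b => ENNReal.ofReal (t - b)) b := by
    intro b
    by_cases hb : b ∈ Set.Icc 0 t
    · rw [Set.indicator_of_mem hb]
      have : Prod.mk b ⁻¹' tri t = Set.Icc 0 (t - b) := by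
        ext c
        simp only [tri, Set.mem_preimage, Set.mem_ofPred_eq, Set.mem_Icc]
        have := hb.1
        constructor
        · rintro ⟨_, h1, h2⟩; exact ⟨h1, by linarith⟩
        · rintro ⟨h1, h2⟩; exact ⟨this, h1, by linarith⟩
      rw [this, Real.volume_Icc, sub_zero]
    · rw [Set.indicator_of_notMem hb]
      have : Prod.mk b ⁻¹' tri t = ∅ := by
        ext c
        simp only [tri, Set.mem_preimage, Set.mem_ofPred_eq, Set.mem_empty_iff_false, iff_false]
        rintro ⟨h0, h1, h2⟩
        exact hb ⟨h0, by linarith⟩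
      rw [this, measure_empty]
  simp_rw [this]
  rw [lintegral_indicator measurableSet_Icc, lint_Icc ht _ (by fun_prop)
    (fun x hx => by linarith [hx.2])]
  congr 1
  rw [intervalIntegral.integral_sub (by simp) (by simp)]
  simp
  ring

lemma volume_simp3 {t : ℝ} (ht : 0 ≤ t) : volume (simp3 t) = ENNReal.ofReal (t ^ 3 / 6) := by
  rw [Measure.volume_eq_prod, Measure.prod_apply (measurableSet_simp3 t)]
  have : ∀ b : ℝ, volume (Prod.mk b ⁻¹' simp3 t)
      = (Set.Icc 0 t).indicator (fun b => ENNReal.ofReal ((t - b) ^ 2 / 2)) b := by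
    intro b
    by_cases hb : b ∈ Set.Icc 0 t
    · rw [Set.indicator_of_mem hb]
      have : Prod.mk b ⁻¹' simp3 t = tri (t - b) := by
        ext c
        simp only [tri, simp3, Set.mem_preimage, Set.mem_ofPred_eq]
        have := hb.1
        constructor
        · rintro ⟨_, h1, h2, h3⟩; exact ⟨h1, h2, by linarith⟩
        · rintro ⟨h1, h2, h3⟩; exact ⟨this, h1, h2, by linarith⟩
      rw [this, volume_tri (by linarith [hb.2])]
    · rw [Set.indicator_of_notMem hb]
      have : Prod.mk b ⁻¹' simp3 t = ∅ := by
        ext c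
        simp only [simp3, Set.mem_preimage, Set.mem_ofPred_eq, Set.mem_empty_iff_false, iff_false]
        rintro ⟨h0, h1, h2, h3⟩
        exact hb ⟨h0, by linarith⟩
      rw [this, measure_empty]
  simp_rw [this]
  rw [lintegral_indicator measurableSet_Icc, lint_Icc ht _ (by fun_prop)
    (fun x hx => by positivity)]
  congr 1
  rw [intervalIntegral.integral_div, intervalIntegral.integral_comp_sub_left (fun x => x ^ 2)]
  simp
  ring

def matM : Matrix (Fin 3) (Fin 3) ℝ := !![-1, 1, 1; 1, -1, 1; 1, 1, -1]

def tetD (e f g : E3) : Set E3 := {v | 0 ≤ lin e f g v ∧ 0 ≤ lin f g e v ∧ 0 ≤ lin g e f v ∧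
  inner ℝ e v + inner ℝ f v + inner ℝ g v ≤ 2 * √2}

lemma Fr.volume_tetD {e f g : E3} (h : Fr e f g) :
    volume (tetD e f g) = ENNReal.ofReal (2 * √2 / 3) := by
  obtain ⟨b, rfl, rfl, rfl⟩ := h.basis
  have hm1 : MeasurePreserving (fun v : E3 => (WithLp.ofLp (b.repr v) : Fin 3 → ℝ)) :=
    (PiLp.volume_preserving_ofLp (Fin 3)).comp b.measurePreserving_repr
  have hdet : LinearMap.det (Matrix.toLin' matM) = 4 := by
    rw [LinearMap.det_toLin', matM, Matrix.det_fin_three]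
    simp
    norm_num
  set S : Set (Fin 3 → ℝ) := (fun v : Fin 3 → ℝ => ((v 0, (v 1, v 2)) : ℝ × (ℝ × ℝ))) ⁻¹'
    simp3 (2 * √2) with hS
  have hSm : MeasurableSet S := mp_coords_pi.measurable (measurableSet_simp3 _)
  have hSv : volume S = ENNReal.ofReal ((2 * √2) ^ 3 / 6) := by
    rw [hS, mp_coords_pi.measure_preimage (measurableSet_simp3 _).nullMeasurableSet,
      volume_simp3 (by positivity)]
  have hP := Measure.addHaar_preimage_linearMap (volume : Measure (Fin 3 → ℝ))
    (f := Matrix.toLin' matM) (by rw [hdet]; norm_num) S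
  have hPm : MeasurableSet (Matrix.toLin' matM ⁻¹' S) :=
    (LinearMap.continuous_of_finiteDimensional (Matrix.toLin' matM)).measurable hSm
  have hset : tetD (b 0) (b 1) (b 2) = (fun v : E3 => (WithLp.ofLp (b.repr v) : Fin 3 → ℝ)) ⁻¹'
      (Matrix.toLin' matM ⁻¹' S) := by
    ext v
    simp only [tetD, hS, simp3, lin, Set.mem_preimage, Set.mem_ofPred_eq, Matrix.toLin'_apply, matM,
      Matrix.mulVec, dotProduct, Fin.sum_univ_three, OrthonormalBasis.repr_apply_apply]
    simp
    intro h1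
    constructor
    · rintro ⟨h2, h3, h4⟩; refine ⟨?_, ?_, ?_⟩ <;> linarith
    · rintro ⟨h2, h3, h4⟩; refine ⟨?_, ?_, ?_⟩ <;> linarith
  rw [hset, hm1.measure_preimage hPm.nullMeasurableSet, hP, hSv, hdet,
    ← ENNReal.ofReal_mul (by positivity)]
  congr 1
  have h2 : √2 ^ 2 = 2 := Real.sq_sqrt (by norm_num)
  rw [abs_of_pos (by norm_num)]
  linear_combination (1/3) * √2 * h2

lemma tetra_frame {p₀ p₁ p₂ p₃ : E3}
    (h01 : dist p₀ p₁ = 2) (h02 : dist p₀ p₂ = 2) (h03 : dist p₀ p₃ = 2)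
    (h12 : dist p₁ p₂ = 2) (h13 : dist p₁ p₃ = 2) (h23 : dist p₂ p₃ = 2) :
    ∃ e f g : E3, Fr e f g ∧ p₁ - p₀ = √2 • (f + g) ∧ p₂ - p₀ = √2 • (g + e) ∧
      p₃ - p₀ = √2 • (e + f) := by
  obtain ⟨u, hu⟩ : ∃ u, u = p₁ - p₀ := ⟨_, rfl⟩
  obtain ⟨v, hv⟩ : ∃ v, v = p₂ - p₀ := ⟨_, rfl⟩
  obtain ⟨w, hw⟩ : ∃ w, w = p₃ - p₀ := ⟨_, rfl⟩
  have huu : inner ℝ u u = (4:ℝ) := by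
    rw [real_inner_self_eq_norm_sq, hu, ← dist_eq_norm, dist_comm, h01]; norm_num
  have hvv : inner ℝ v v = (4:ℝ) := by
    rw [real_inner_self_eq_norm_sq, hv, ← dist_eq_norm, dist_comm, h02]; norm_num
  have hww : inner ℝ w w = (4:ℝ) := by
    rw [real_inner_self_eq_norm_sq, hw, ← dist_eq_norm, dist_comm, h03]; norm_num
  have key : ∀ x y : E3, inner ℝ x x = (4:ℝ) → inner ℝ y y = (4:ℝ) → ‖x - y‖ = 2 →
      inner ℝ x y = (2:ℝ) ∧ inner ℝ y x = (2:ℝ) := by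
    intro x y hx hy hxy
    have : inner ℝ (x - y) (x - y) = (4:ℝ) := by rw [real_inner_self_eq_norm_sq, hxy]; norm_num
    rw [inner_sub_left, inner_sub_right, inner_sub_right, hx, hy] at this
    have hc := real_inner_comm x y
    constructor <;> linarith
  obtain ⟨huv, hvu⟩ := key u v huu hvv (by rw [hu, hv, sub_sub_sub_cancel_right, ← dist_eq_norm, h12])
  obtain ⟨huw, hwu⟩ := key u w huu hww (by rw [hu, hw, sub_sub_sub_cancel_right, ← dist_eq_norm, h13])
  obtain ⟨hvw, hwv⟩ := key v w hvv hww (by rw [hv, hw, sub_sub_sub_cancel_right, ← dist_eq_norm, h23])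
  rw [← hu, ← hv, ← hw]
  have h2 : √2 * √2 = 2 := Real.mul_self_sqrt (by norm_num)
  have hs : (√2 / 4) * (√2 / 4) = 1 / 8 := by linear_combination h2 / 16
  refine ⟨(√2 / 4) • (-u + v + w), (√2 / 4) • (u - v + w), (√2 / 4) • (u + v - w), ?_, ?_, ?_, ?_⟩
  · constructor <;> simp only [inner_smul_left, inner_smul_right, inner_add_left, inner_add_right,
      inner_sub_left, inner_sub_right, inner_neg_left, inner_neg_right, huu, hvv, hww, huv, hvu, huw,
      hwu, hvw, hwv, RCLike.conj_to_real] <;> ring_nf <;> norm_num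
  · rw [← smul_add, smul_smul, show √2 * (√2 / 4) = 1 / 2 by linear_combination h2 / 4]
    module
  · rw [← smul_add, smul_smul, show √2 * (√2 / 4) = 1 / 2 by linear_combination h2 / 4]
    module
  · rw [← smul_add, smul_smul, show √2 * (√2 / 4) = 1 / 2 by linear_combination h2 / 4]
    module

lemma convex_tetD (e f g : E3) : Convex ℝ (tetD e f g) := by
  intro x hx y hy a b ha hb hab
  have hl : ∀ e f g, lin e f g (a • x + b • y) = a * lin e f g x + b * lin e f g y := by
    intro e f g
    simp only [lin, inner_add_right, inner_smul_right]; ring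
  obtain ⟨x1, x2, x3, x4⟩ := hx
  obtain ⟨y1, y2, y3, y4⟩ := hy
  refine ⟨?_, ?_, ?_, ?_⟩
  · rw [hl]; positivity
  · rw [hl]; positivity
  · rw [hl]; positivity
  · simp only [inner_add_right, inner_smul_right]
    calc _ = a * (inner ℝ e x + inner ℝ f x + inner ℝ g x)
          + b * (inner ℝ e y + inner ℝ f y + inner ℝ g y) := by ring
      _ ≤ a * (2 * √2) + b * (2 * √2) := by gcongr
      _ = 2 * √2 := by rw [← add_mul, hab, one_mul]

lemma hull_eq_s11 {p₀ p₁ p₂ p₃ e f g : E3} (h : Fr e f g) (h1 : p₁ - p₀ = √2 • (f + g))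
    (h2 : p₂ - p₀ = √2 • (g + e)) (h3 : p₃ - p₀ = √2 • (e + f)) :
    convexHull ℝ ({p₀, p₁, p₂, p₃} : Set E3) = (fun x => x - p₀) ⁻¹' tetD e f g := by
  have hp : 0 < √2 := by positivity
  have hfe := h.ef
  have hge := h.eg
  have hgf := h.fg
  rw [real_inner_comm] at hfe hge hgf
  apply Set.Subset.antisymm
  · apply convexHull_min
    · rintro x (rfl | rfl | rfl | rfl) <;> rw [Set.mem_preimage]
      · simp [tetD, lin]
      · rw [h1]
        simp only [tetD, lin, Set.mem_ofPred_eq, inner_smul_right, inner_add_right, h.ef, h.eg, h.fg,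
          hfe, hge, hgf, h.ee, h.ff, h.gg]
        refine ⟨?_, ?_, ?_, ?_⟩ <;> linarith
      · rw [h2]
        simp only [tetD, lin, Set.mem_ofPred_eq, inner_smul_right, inner_add_right, h.ef, h.eg, h.fg,
          hfe, hge, hgf, h.ee, h.ff, h.gg]
        refine ⟨?_, ?_, ?_, ?_⟩ <;> linarith
      · rw [h3]
        simp only [tetD, lin, Set.mem_ofPred_eq, inner_smul_right, inner_add_right, h.ef, h.eg, h.fg,
          hfe, hge, hgf, h.ee, h.ff, h.gg]
        refine ⟨?_, ?_, ?_, ?_⟩ <;> linarith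
    · have := (convex_tetD e f g).translate_preimage_right (-p₀)
      convert this using 2
      ext x
      rw [sub_eq_neg_add]
  · intro x hx
    rw [Set.mem_preimage] at hx
    obtain ⟨x1, x2, x3, x4⟩ := hx
    set v := x - p₀ with hv
    have hv' := h.expand v
    have hs : (√2 / 4) * √2 = 1 / 2 := by
      linear_combination (1/4) * Real.mul_self_sqrt (by norm_num : (0:ℝ) ≤ 2)
    have h4 : 0 ≤ √2 / 4 := by positivity
    have hsum := (convex_convexHull ℝ ({p₀, p₁, p₂, p₃} : Set E3)).sum_mem
      (t := (Finset.univ : Finset (Fin 4)))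
      (w := ![1 - (√2 / 4) * (inner ℝ e v + inner ℝ f v + inner ℝ g v), (√2 / 4) * lin e f g v,
        (√2 / 4) * lin f g e v, (√2 / 4) * lin g e f v]) (z := ![p₀, p₁, p₂, p₃])
      (by
        intro i _
        fin_cases i
        · simp only [Fin.zero_eta, Matrix.cons_val_zero]
          nlinarith
        · exact mul_nonneg h4 x1
        · exact mul_nonneg h4 x2
        · exact mul_nonneg h4 x3)
      (by
        rw [Fin.sum_univ_four]
        simp [lin]
        ring)
      (by
        intro i _
        apply subset_convexHull
        fin_cases i <;> simp)
    rw [Fin.sum_univ_four] at hsum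
    simp only [Matrix.cons_val_zero, Matrix.cons_val_one, Matrix.cons_val] at hsum
    convert hsum using 1
    have e1 : p₁ = √2 • (f + g) + p₀ := by rw [← h1]; abel
    have e2 : p₂ = √2 • (g + e) + p₀ := by rw [← h2]; abel
    have e3 : p₃ = √2 • (e + f) + p₀ := by rw [← h3]; abel
    have ex : x = v + p₀ := by rw [hv]; abel
    rw [e1, e2, e3, ex]
    simp only [lin]
    generalize hA : (inner ℝ e v : ℝ) = A at *
    generalize hB : (inner ℝ f v : ℝ) = B at *
    generalize hC : (inner ℝ g v : ℝ) = C at *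
    rw [← hv']
    simp only [smul_add (√2), smul_add (√2 / 4 * _), smul_smul]
    rw [show ∀ t, √2 / 4 * t * √2 = t / 2 from fun t => by linear_combination t * hs,
      show ∀ t, √2 / 4 * t * √2 = t / 2 from fun t => by linear_combination t * hs,
      show ∀ t, √2 / 4 * t * √2 = t / 2 from fun t => by linear_combination t * hs]
    module

lemma hull_ball {p₀ p₁ p₂ p₃ : E3}
    (h01 : dist p₀ p₁ = 2) (h02 : dist p₀ p₂ = 2) (h03 : dist p₀ p₃ = 2)
    (h12 : dist p₁ p₂ = 2) (h13 : dist p₁ p₃ = 2) (h23 : dist p₂ p₃ = 2) :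
    volume.real (convexHull ℝ ({p₀, p₁, p₂, p₃} : Set E3) ∩ Metric.closedBall p₀ 1)
      = arccos (1 / 3) - π / 3 := by
  obtain ⟨e, f, g, h, h1, h2, h3⟩ := tetra_frame h01 h02 h03 h12 h13 h23
  rw [hull_eq_s11 h h1 h2 h3, ← h.cone]
  simp only [measureReal_def]
  congr 1
  have hs := measure_preimage_add_right (volume : Measure E3) (-p₀)
    ({v : E3 | 0 ≤ lin e f g v ∧ 0 ≤ lin f g e v ∧ 0 ≤ lin g e f v} ∩ Metric.closedBall 0 1)
  rw [← hs]
  congr 1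
  ext x
  simp only [Set.mem_inter_iff, Set.mem_preimage, tetD, Set.mem_ofPred_eq, Metric.mem_closedBall,
    dist_eq_norm, sub_zero, ← sub_eq_add_neg]
  constructor
  · rintro ⟨⟨a, b, c, -⟩, d⟩
    exact ⟨⟨a, b, c⟩, d⟩
  · rintro ⟨⟨a, b, c⟩, d⟩
    refine ⟨⟨a, b, c, ?_⟩, d⟩
    have hn := h.norm_sq (x - p₀)
    have hn1 : ‖x - p₀‖ ^ 2 ≤ 1 := (sq_le_one_iff₀ (norm_nonneg _)).2 d
    have h2 : √2 ^ 2 = 2 := Real.sq_sqrt (by norm_num)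
    generalize (inner ℝ e (x - p₀) : ℝ) = A at *
    generalize (inner ℝ f (x - p₀) : ℝ) = B at *
    generalize (inner ℝ g (x - p₀) : ℝ) = C at *
    apply (abs_le_of_sq_le_sq' _ (by positivity)).2
    nlinarith [sq_nonneg (A - B), sq_nonneg (B - C), sq_nonneg (A - C)]

lemma hull_vol {p₀ p₁ p₂ p₃ : E3}
    (h01 : dist p₀ p₁ = 2) (h02 : dist p₀ p₂ = 2) (h03 : dist p₀ p₃ = 2)
    (h12 : dist p₁ p₂ = 2) (h13 : dist p₁ p₃ = 2) (h23 : dist p₂ p₃ = 2) :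
    (volume (convexHull ℝ ({p₀, p₁, p₂, p₃} : Set E3))).toReal = 2 * √2 / 3 := by
  obtain ⟨e, f, g, h, h1, h2, h3⟩ := tetra_frame h01 h02 h03 h12 h13 h23
  rw [hull_eq_s11 h h1 h2 h3]
  have hs := measure_preimage_add_right (volume : Measure E3) (-p₀) (tetD e f g)
  simp only [← sub_eq_add_neg] at hs
  rw [hs, h.volume_tetD, ENNReal.toReal_ofReal (by positivity)]

lemma balls_null {p q : E3} (h : dist p q = 2) :
    volume (Metric.closedBall p 1 ∩ Metric.closedBall q 1) = 0 := by
  refine measure_mono_null (t := {midpoint ℝ p q}) ?_ (measure_singleton _)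
  rintro x ⟨h1, h2⟩
  rw [Metric.mem_closedBall] at h1 h2
  have ht := dist_triangle p x q
  rw [dist_comm p x] at ht
  apply eq_midpoint_of_dist_eq_half
  · rw [dist_comm p x, h]; linarith
  · rw [h]; linarith

lemma hull_union {p₀ p₁ p₂ p₃ : E3}
    (h01 : dist p₀ p₁ = 2) (h02 : dist p₀ p₂ = 2) (h03 : dist p₀ p₃ = 2)
    (h12 : dist p₁ p₂ = 2) (h13 : dist p₁ p₃ = 2) (h23 : dist p₂ p₃ = 2) :
    (volume (convexHull ℝ ({p₀, p₁, p₂, p₃} : Set E3) ∩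
        (Metric.closedBall p₀ 1 ∪ Metric.closedBall p₁ 1 ∪ Metric.closedBall p₂ 1 ∪
          Metric.closedBall p₃ 1))).toReal = (4 / 3) * (3 * arccos (1 / 3) - π) := by
  have c0 := hull_ball h01 h02 h03 h12 h13 h23
  have h10 := h01
  have h20 := h02
  have h30 := h03
  have h21 := h12
  have h31 := h13
  have h32 := h23
  rw [dist_comm] at h10 h20 h30 h21 h31 h32
  have c1 := hull_ball h10 h12 h13 h02 h03 h23
  have c2 := hull_ball h20 h21 h23 h01 h03 h13
  have c3 := hull_ball h30 h31 h32 h01 h02 h12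
  have e1 : ({p₁, p₀, p₂, p₃} : Set E3) = {p₀, p₁, p₂, p₃} := by
    ext x; simp only [Set.mem_insert_iff, Set.mem_singleton_iff]; tauto
  have e2 : ({p₂, p₀, p₁, p₃} : Set E3) = {p₀, p₁, p₂, p₃} := by
    ext x; simp only [Set.mem_insert_iff, Set.mem_singleton_iff]; tauto
  have e3 : ({p₃, p₀, p₁, p₂} : Set E3) = {p₀, p₁, p₂, p₃} := by
    ext x; simp only [Set.mem_insert_iff, Set.mem_singleton_iff]; tauto
  rw [e1] at c1
  rw [e2] at c2
  rw [e3] at c3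
  set T := convexHull ℝ ({p₀, p₁, p₂, p₃} : Set E3) with hT
  have hTm : MeasurableSet T := by
    have : ({p₀, p₁, p₂, p₃} : Set E3).Finite := Set.toFinite _
    exact (this.isCompact_convexHull ℝ).isClosed.measurableSet
  have hm : ∀ p, MeasurableSet (T ∩ Metric.closedBall p 1) := fun p =>
    hTm.inter Metric.isClosed_closedBall.measurableSet
  have hd : ∀ {p q : E3}, dist p q = 2 →
      AEDisjoint volume (T ∩ Metric.closedBall p 1) (T ∩ Metric.closedBall q 1) := by
    intro p q hpq
    refine measure_mono_null ?_ (balls_null hpq)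
    rintro x ⟨⟨_, h1⟩, ⟨_, h2⟩⟩
    exact ⟨h1, h2⟩
  have hfin : ∀ p, volume (T ∩ Metric.closedBall p 1) ≠ ⊤ := fun p =>
    ((measure_mono Set.inter_subset_right).trans_lt measure_closedBall_lt_top).ne
  rw [Set.inter_union_distrib_left, Set.inter_union_distrib_left, Set.inter_union_distrib_left,
    measure_union₀ (hm _).nullMeasurableSet, measure_union₀ (hm _).nullMeasurableSet,
    measure_union₀ (hm _).nullMeasurableSet (hd h01)]
  · simp only [measureReal_def] at c0 c1 c2 c3
    rw [ENNReal.toReal_add, ENNReal.toReal_add, ENNReal.toReal_add, c0, c1, c2, c3]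
    · ring
    all_goals simp [hfin]
  · exact (hd h02).union_left (hd h12)
  · exact ((hd h03).union_left (hd h13)).union_left (hd h23)

lemma pt_eq : (4 / 3) * (3 * arccos (1 / 3) - π) - δoct * (2 * Real.sqrt 2 / 3)
    = 6 * arccos (1 / 3) - 7 / 3 * π := by
  have h8 : √8 = 2 * √2 := by
    rw [show (8:ℝ) = 2 ^ 2 * 2 by norm_num, Real.sqrt_mul (by norm_num), Real.sqrt_sq (by norm_num)]
  have h2 : 0 < √2 := by positivity
  have : δoct * (2 * Real.sqrt 2 / 3) = (-3 * π + 6 * (2 * arccos (1 / √3))) / 3 := by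
    unfold δoct
    rw [h8]
    field_simp
    ring
  rw [this, two_arccos]
  ring

/-- The regular tetrahedron of edge `2` has volume `2√2/3`, contains a total ball
volume of `(4/3)(3·arccos(1/3) - π)`, and its compression is
`1 pt = (4/3)(3·arccos(1/3) - π) - δ_oct·(2√2/3) ∈ (0.0553, 0.0554)`. -/
theorem regular_tetrahedron_compression (p₀ p₁ p₂ p₃ : E3)
    (h01 : dist p₀ p₁ = 2) (h02 : dist p₀ p₂ = 2) (h03 : dist p₀ p₃ = 2)
    (h12 : dist p₁ p₂ = 2) (h13 : dist p₁ p₃ = 2) (h23 : dist p₂ p₃ = 2) :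
    (volume (convexHull ℝ ({p₀, p₁, p₂, p₃} : Set E3))).toReal = 2 * Real.sqrt 2 / 3 ∧
    (volume (convexHull ℝ ({p₀, p₁, p₂, p₃} : Set E3) ∩
        (Metric.closedBall p₀ 1 ∪ Metric.closedBall p₁ 1 ∪ Metric.closedBall p₂ 1 ∪
          Metric.closedBall p₃ 1))).toReal = (4 / 3) * (3 * arccos (1 / 3) - π) ∧
    Gamma p₀ p₁ p₂ p₃ = (4 / 3) * (3 * arccos (1 / 3) - π) - δoct * (2 * Real.sqrt 2 / 3) ∧
    0.0553 < (4 / 3) * (3 * arccos (1 / 3) - π) - δoct * (2 * Real.sqrt 2 / 3) ∧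
    (4 / 3) * (3 * arccos (1 / 3) - π) - δoct * (2 * Real.sqrt 2 / 3) < 0.0554 := by
  have hv := hull_vol h01 h02 h03 h12 h13 h23
  have hu := hull_union h01 h02 h03 h12 h13 h23
  refine ⟨hv, hu, ?_, ?_, ?_⟩
  · rw [_root_.Gamma, hv, hu]
    ring
  · rw [pt_eq]
    linarith [arccos_third_gt, pi_lt_d6]
  · rw [pt_eq]
    linarith [arccos_third_lt, pi_gt_d6]
end
end
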